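/- arXiv:2111.08199 — 2 statements merged into one kernel-verified Lean document; each statement's English description precedes it below -/
import Mathlib

section
/- Let H be a compact metrizable space, let n ≥ 1, and let v_1, …, v_{n+1} be n+1 distinct points of H. Let (X_1,d_1), …, (X_{n+1},d_{n+1}) be compact CAT(0) metric spaces with d_GH((X_i,d_i),(X_j,d_j)) > 0 for all distinct i, j. Then there exists a topological embedding Φ : H → 𝒵 (into the Gromov–Hausdorff space) such that Φ(v_i) = (X_i,d_i) for every i = 1, …, n+1. -/
open GromovHausdorff

/-- A metric space is *geodesic* if any two points `x, y` are joined by a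
geodesic, i.e. a map `γ : [0,1] → X` with `γ 0 = x`, `γ 1 = y` and
`dist (γ s) (γ t) = |s - t| * dist x y`. -/
def IsGeodesicSpace (X : Type*) [MetricSpace X] : Prop :=
  ∀ x y : X, ∃ γ : ℝ → X, γ 0 = x ∧ γ 1 = y ∧
    ∀ s ∈ Set.Icc (0 : ℝ) 1, ∀ t ∈ Set.Icc (0 : ℝ) 1,
      dist (γ s) (γ t) = |s - t| * dist x y

/-- A metric space is *CAT(0)* if it is geodesic and satisfies the comparison
inequality with Euclidean comparison triangles; equivalently (and this is the
formulation used here), for every geodesic `γ` from `x` to `y` and every point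
`z`, the comparison (CN) inequality
`dist z (γ t) ^ 2 ≤ (1 - t) * dist z x ^ 2 + t * dist z y ^ 2 - t * (1 - t) * dist x y ^ 2`
holds for all `t ∈ [0,1]`. -/
def IsCAT0Space (X : Type*) [MetricSpace X] : Prop :=
  IsGeodesicSpace X ∧
  ∀ x y z : X, ∀ γ : ℝ → X, γ 0 = x → γ 1 = y →
    (∀ s ∈ Set.Icc (0 : ℝ) 1, ∀ t ∈ Set.Icc (0 : ℝ) 1,
      dist (γ s) (γ t) = |s - t| * dist x y) →
    ∀ t ∈ Set.Icc (0 : ℝ) 1,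
      dist z (γ t) ^ 2 ≤
        (1 - t) * dist z x ^ 2 + t * dist z y ^ 2 - t * (1 - t) * dist x y ^ 2


/-- Set version of the CAT(0) condition, with arc-length geodesics and a pointwise comparison. -/
def CATSet {A : Type*} [MetricSpace A] (S : Set A) : Prop :=
  (∀ x ∈ S, ∀ y ∈ S, ∃ γ : ℝ → A, γ 0 = x ∧ γ (dist x y) = y ∧
    (∀ s ∈ Set.Icc 0 (dist x y), γ s ∈ S) ∧
    ∀ s ∈ Set.Icc 0 (dist x y), ∀ t ∈ Set.Icc 0 (dist x y), s ≤ t → dist (γ s) (γ t) = t - s) ∧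
  ∀ x ∈ S, ∀ y ∈ S, ∀ z ∈ S, ∀ m ∈ S, ∀ t ∈ Set.Icc (0 : ℝ) 1,
    dist x m = t * dist x y → dist m y = (1 - t) * dist x y →
    dist z m ^ 2 ≤ (1 - t) * dist z x ^ 2 + t * dist z y ^ 2 - t * (1 - t) * dist x y ^ 2

lemma CATSet.isCAT0 {A Y : Type*} [MetricSpace A] [MetricSpace Y] {S : Set A} (hS : CATSet S)
    (e : Y ≃ᵢ S) : IsCAT0Space Y := by
  have hd : ∀ x y : Y, dist ((e x : S) : A) (e y) = dist x y := fun x y => by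
    rw [← Subtype.dist_eq, e.dist_eq]
  constructor
  · intro x y
    obtain ⟨γ, h0, h1, hm, hg⟩ := hS.1 (e x) (e x).2 (e y) (e y).2
    rw [hd] at h1 hm hg
    have hmem : ∀ s ∈ Set.Icc (0 : ℝ) 1, s * dist x y ∈ Set.Icc 0 (dist x y) := by
      intro s hs
      constructor
      · exact mul_nonneg hs.1 dist_nonneg
      · nlinarith [hs.2, dist_nonneg (x := x) (y := y)]
    classical
    let δ : ℝ → Y := fun s => if h : s ∈ Set.Icc (0 : ℝ) 1 then
      e.symm ⟨γ (s * dist x y), hm _ (hmem s h)⟩ else x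
    have hδ : ∀ s ∈ Set.Icc (0 : ℝ) 1, ((e (δ s) : S) : A) = γ (s * dist x y) := by
      intro s hs
      simp only [δ, dif_pos hs, IsometryEquiv.apply_symm_apply]
    have key : ∀ s ∈ Set.Icc (0 : ℝ) 1, ∀ t ∈ Set.Icc (0 : ℝ) 1, s ≤ t →
        dist (δ s) (δ t) = |s - t| * dist x y := by
      intro s hs t ht hst
      rw [← hd, hδ s hs, hδ t ht, hg _ (hmem s hs) _ (hmem t ht)
        (mul_le_mul_of_nonneg_right hst dist_nonneg), abs_of_nonpos (by linarith)]
      ring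
    refine ⟨δ, ?_, ?_, ?_⟩
    · apply e.injective; apply Subtype.ext
      rw [hδ 0 (by simp), zero_mul, h0]
    · apply e.injective; apply Subtype.ext
      rw [hδ 1 (by simp), one_mul, h1]
    · intro s hs t ht
      rcases le_total s t with h | h
      · exact key s hs t ht h
      · rw [dist_comm, abs_sub_comm, key t ht s hs h]
  · intro x y z γ h0 h1 hg t ht
    have := hS.2 (e x) (e x).2 (e y) (e y).2 (e z) (e z).2 (e (γ t)) (e (γ t)).2 t ht
    simp only [hd] at this
    apply this
    · have h := hg 0 (by simp) t ht
      rw [h0] at h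
      rw [h, zero_sub, abs_neg, abs_of_nonneg ht.1]
    · have h := hg t ht 1 (by simp)
      rw [h1] at h
      rw [h, abs_sub_comm, abs_of_nonneg (by linarith [ht.2])]

/-- Concatenation of arc-length geodesics. -/
lemma geo_concat {A : Type*} [MetricSpace A] {S T : Set A} {x m y : A} {γ₁ γ₂ : ℝ → A}
    (hadd : dist x y = dist x m + dist m y)
    (a0 : γ₁ 0 = x) (a1 : γ₁ (dist x m) = m)
    (am : ∀ s ∈ Set.Icc 0 (dist x m), γ₁ s ∈ S)
    (ag : ∀ s ∈ Set.Icc 0 (dist x m), ∀ t ∈ Set.Icc 0 (dist x m), s ≤ t →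
      dist (γ₁ s) (γ₁ t) = t - s)
    (b0 : γ₂ 0 = m) (b1 : γ₂ (dist m y) = y)
    (bm : ∀ s ∈ Set.Icc 0 (dist m y), γ₂ s ∈ T)
    (bg : ∀ s ∈ Set.Icc 0 (dist m y), ∀ t ∈ Set.Icc 0 (dist m y), s ≤ t →
      dist (γ₂ s) (γ₂ t) = t - s) :
    ∃ γ : ℝ → A, γ 0 = x ∧ γ (dist x m) = m ∧ γ (dist x y) = y ∧
      (∀ s ∈ Set.Icc 0 (dist x y), γ s ∈ S ∪ T) ∧
      ∀ s ∈ Set.Icc 0 (dist x y), ∀ t ∈ Set.Icc 0 (dist x y), s ≤ t →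
        dist (γ s) (γ t) = t - s := by
  have p1 : 0 ≤ dist x m := dist_nonneg
  have p2 : 0 ≤ dist m y := dist_nonneg
  set a := dist x m with ha
  set b := dist m y with hb
  let γ : ℝ → A := fun s => if s ≤ a then γ₁ s else γ₂ (s - a)
  have g1 : ∀ s, s ≤ a → γ s = γ₁ s := fun s hs => if_pos hs
  have g2 : ∀ s, a ≤ s → γ s = γ₂ (s - a) := by
    intro s hs
    rcases hs.eq_or_lt with h | h
    · subst h; rw [g1 _ le_rfl, a1, sub_self, b0]
    · exact if_neg (not_le.2 h)
  refine ⟨γ, ?_, ?_, ?_, ?_, ?_⟩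
  · rw [g1 _ p1, a0]
  · rw [g1 _ le_rfl, a1]
  · rw [g2 _ (by linarith), hadd, add_sub_cancel_left, b1]
  · intro s hs
    rcases le_total s a with h | h
    · rw [g1 _ h]; exact Or.inl (am _ ⟨hs.1, h⟩)
    · rw [g2 _ h]; exact Or.inr (bm _ ⟨by linarith, by linarith [hs.2]⟩)
  · intro s hs t ht hst
    rcases le_total t a with h | h
    · rw [g1 _ h, g1 _ (hst.trans h)]
      exact ag _ ⟨hs.1, hst.trans h⟩ _ ⟨ht.1, h⟩ hst
    rcases le_total a s with h' | h'
    · rw [g2 _ h, g2 _ h', bg _ ⟨by linarith, by linarith [hs.2]⟩ _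
        ⟨by linarith, by linarith [ht.2]⟩ (by linarith)]
      ring
    · rw [g2 _ h, g1 _ h']
      have e1 := ag _ ⟨hs.1, h'⟩ _ ⟨p1, le_rfl⟩ h'
      have e2 := ag _ ⟨le_rfl, p1⟩ _ ⟨hs.1, h'⟩ hs.1
      have e3 := bg _ ⟨le_rfl, p2⟩ _ ⟨by linarith, by linarith [ht.2]⟩ (by linarith : 0 ≤ t - a)
      have e4 := bg _ ⟨by linarith, by linarith [ht.2]⟩ _ ⟨p2, le_rfl⟩
        (by linarith [ht.2] : t - a ≤ b)
      rw [a1] at e1; rw [a0] at e2; rw [b0] at e3; rw [b1] at e4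
      have t1 := dist_triangle (γ₁ s) m (γ₂ (t - a))
      have t2 := dist_triangle4 x (γ₁ s) (γ₂ (t - a)) y
      apply le_antisymm <;> linarith

lemma IsGeodesicSpace.arc {X : Type*} [MetricSpace X] (h : IsGeodesicSpace X) (x y : X) :
    ∃ γ : ℝ → X, γ 0 = x ∧ γ (dist x y) = y ∧
    ∀ s ∈ Set.Icc 0 (dist x y), ∀ t ∈ Set.Icc 0 (dist x y), s ≤ t →
      dist (γ s) (γ t) = t - s := by
  obtain ⟨γ, h0, h1, hg⟩ := h x y
  rcases (dist_nonneg (x := x) (y := y)).eq_or_lt with hD | hD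
  · refine ⟨fun _ => x, rfl, dist_eq_zero.1 hD.symm, ?_⟩
    intro s hs t ht _
    rw [← hD] at hs ht
    have := hs.1; have := hs.2; have := ht.1; have := ht.2
    rw [dist_self]; linarith
  · have hm : ∀ s ∈ Set.Icc 0 (dist x y), s / dist x y ∈ Set.Icc (0 : ℝ) 1 := fun s hs =>
      ⟨div_nonneg hs.1 hD.le, (div_le_one hD).2 hs.2⟩
    refine ⟨fun s => γ (s / dist x y), by simpa using h0, by simpa [hD.ne'] using h1, ?_⟩
    intro s hs t ht hst
    rw [hg _ (hm s hs) _ (hm t ht), abs_sub_comm, ← sub_div,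
      abs_of_nonneg (div_nonneg (by linarith) hD.le)]
    field_simp

lemma IsCAT0Space.pointwise {X : Type*} [MetricSpace X] (h : IsCAT0Space X) (x y z m : X)
    (t : ℝ) (ht : t ∈ Set.Icc (0 : ℝ) 1) (h1 : dist x m = t * dist x y)
    (h2 : dist m y = (1 - t) * dist x y) :
    dist z m ^ 2 ≤ (1 - t) * dist z x ^ 2 + t * dist z y ^ 2 - t * (1 - t) * dist x y ^ 2 := by
  obtain ⟨γ₁, a0, a1, ag⟩ := h.1.arc x m
  obtain ⟨γ₂, b0, b1, bg⟩ := h.1.arc m y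
  obtain ⟨γ, c0, cm, c1, -, cg⟩ := geo_concat (S := Set.univ) (T := Set.univ)
    (by rw [h1, h2]; ring) a0 a1 (fun _ _ => trivial) ag b0 b1 (fun _ _ => trivial) bg
  have hm : ∀ s ∈ Set.Icc (0 : ℝ) 1, s * dist x y ∈ Set.Icc 0 (dist x y) := by
    intro s hs
    constructor
    · exact mul_nonneg hs.1 dist_nonneg
    · nlinarith [hs.2, dist_nonneg (x := x) (y := y)]
  have := h.2 x y z (fun s => γ (s * dist x y)) (by simpa using c0) (by simpa using c1) ?_ t ht
  · simpa only [← h1, cm] using this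
  · have key : ∀ s ∈ Set.Icc (0 : ℝ) 1, ∀ t ∈ Set.Icc (0 : ℝ) 1, s ≤ t →
        dist (γ (s * dist x y)) (γ (t * dist x y)) = |s - t| * dist x y := by
      intro s hs t ht hst
      rw [cg _ (hm s hs) _ (hm t ht)
        (mul_le_mul_of_nonneg_right hst dist_nonneg), abs_of_nonpos (by linarith)]
      ring
    intro s hs t ht
    rcases le_total s t with h | h
    · exact key s hs t ht h
    · rw [dist_comm, abs_sub_comm]; exact key t ht s hs h

/-- Rescaled images of CAT(0) spaces. -/
lemma CATSet.of_scaled {A X : Type*} [MetricSpace A] [MetricSpace X] (hX : IsCAT0Space X)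
    (f : X → A) (r : ℝ) (hr : 0 ≤ r) (hf : ∀ x y, dist (f x) (f y) = r * dist x y) :
    CATSet (Set.range f) := by
  rcases hr.eq_or_lt with rfl | hr
  · constructor
    · rintro _ ⟨x, rfl⟩ _ ⟨y, rfl⟩
      have hxy : f x = f y := by rw [← dist_eq_zero, hf, zero_mul]
      refine ⟨fun _ => f x, rfl, hxy, fun _ _ => ⟨x, rfl⟩, ?_⟩
      intro s hs t ht _
      rw [hf, zero_mul] at hs ht
      have := hs.1; have := hs.2; have := ht.1; have := ht.2
      rw [dist_self]; linarith
    · rintro _ ⟨x, rfl⟩ _ ⟨y, rfl⟩ _ ⟨z, rfl⟩ _ ⟨m, rfl⟩ t ht _ _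
      simp [hf]
  · constructor
    · rintro _ ⟨x, rfl⟩ _ ⟨y, rfl⟩
      obtain ⟨γ, h0, h1, hg⟩ := hX.1.arc x y
      have hm : ∀ s ∈ Set.Icc 0 (r * dist x y), s / r ∈ Set.Icc 0 (dist x y) := fun s hs =>
        ⟨div_nonneg hs.1 hr.le, (div_le_iff₀' hr).2 hs.2⟩
      rw [hf]
      refine ⟨fun s => f (γ (s / r)), by simp [h0], ?_, fun _ _ => ⟨_, rfl⟩, ?_⟩
      · simp only [mul_div_cancel_left₀ _ hr.ne', h1]
      · intro s hs t ht hst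
        rw [hf, hg _ (hm s hs) _ (hm t ht) (by gcongr)]
        field_simp
    · rintro _ ⟨x, rfl⟩ _ ⟨y, rfl⟩ _ ⟨z, rfl⟩ _ ⟨m, rfl⟩ t ht h1 h2
      simp only [hf] at h1 h2 ⊢
      have := hX.pointwise x y z m t ht (mul_left_cancel₀ hr.ne' (by linarith))
        (mul_left_cancel₀ hr.ne' (by linarith))
      nlinarith [mul_le_mul_of_nonneg_left this (sq_nonneg r)]

/-- Stewart's identity. -/
lemma stewart {V : Type*} [NormedAddCommGroup V] [InnerProductSpace ℝ V] (x y z : V) (t : ℝ) :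
    dist z ((1 - t) • x + t • y) ^ 2 =
      (1 - t) * dist z x ^ 2 + t * dist z y ^ 2 - t * (1 - t) * dist x y ^ 2 := by
  have e1 : z - ((1 - t) • x + t • y) = (1 - t) • (z - x) + t • (z - y) := by module
  have e2 : x - y = (z - y) - (z - x) := by abel
  rw [dist_eq_norm, dist_eq_norm, dist_eq_norm, dist_eq_norm, e1, e2]
  generalize z - x = u
  generalize z - y = w
  rw [norm_add_sq_real, norm_sub_sq_real, norm_smul, norm_smul, real_inner_smul_left,
    real_inner_smul_right, mul_pow, mul_pow,
    Real.norm_eq_abs, Real.norm_eq_abs, sq_abs, sq_abs, real_inner_comm]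
  ring

lemma CATSet.of_convex {A V : Type*} [MetricSpace A] [NormedAddCommGroup V]
    [InnerProductSpace ℝ V] {S : Set V} (hS : Convex ℝ S) (f : V → A) (hf : Isometry f) :
    CATSet (f '' S) := by
  constructor
  · rintro _ ⟨x, hx, rfl⟩ _ ⟨y, hy, rfl⟩
    rw [hf.dist_eq]
    rcases (dist_nonneg (x := x) (y := y)).eq_or_lt with hD | hD
    · refine ⟨fun _ => f x, rfl, by rw [dist_eq_zero.1 hD.symm], fun _ _ => ⟨x, hx, rfl⟩, ?_⟩
      intro s hs t ht _
      rw [← hD] at hs ht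
      have := hs.1; have := hs.2; have := ht.1; have := ht.2
      rw [dist_self]; linarith
    · refine ⟨fun s => f (AffineMap.lineMap x y (s / dist x y)), by simp, by simp [hD.ne'], ?_, ?_⟩
      · intro s hs
        refine ⟨_, hS.lineMap_mem hx hy ⟨div_nonneg hs.1 hD.le, (div_le_one hD).2 hs.2⟩, rfl⟩
      · intro s hs t ht hst
        rw [hf.dist_eq, dist_lineMap_lineMap, Real.dist_eq, abs_sub_comm, ← sub_div,
          abs_of_nonneg (div_nonneg (by linarith) hD.le)]
        field_simp
  · rintro _ ⟨x, hx, rfl⟩ _ ⟨y, hy, rfl⟩ _ ⟨z, hz, rfl⟩ _ ⟨m, hm, rfl⟩ t ht h1 h2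
    simp only [hf.dist_eq] at *
    have hmm : m = (1 - t) • x + t • y := by
      have := stewart x y m t
      rw [dist_comm m x, h1, h2] at this
      rw [← dist_eq_zero, ← sq_eq_zero_iff, this]; ring
    rw [hmm, stewart]

lemma glue_ineq1 {c f f0 f1 D t : ℝ} (ht : t ∈ Set.Icc (0 : ℝ) 1) (hc : 0 ≤ c) (hf : 0 ≤ f)
    (h0 : 0 ≤ f0) (h1 : 0 ≤ f1) (hD1 : f0 - f1 ≤ D) (hD2 : f1 - f0 ≤ D)
    (h : f ^ 2 ≤ (1 - t) * f0 ^ 2 + t * f1 ^ 2 - t * (1 - t) * D ^ 2) :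
    (c + f) ^ 2 ≤ (1 - t) * (c + f0) ^ 2 + t * (c + f1) ^ 2 - t * (1 - t) * D ^ 2 := by
  have ht0 := ht.1
  have ht1 : 0 ≤ 1 - t := by linarith [ht.2]
  have hsq : (f0 - f1) ^ 2 ≤ D ^ 2 := sq_le_sq' (by linarith) hD1
  have hlin : f ≤ (1 - t) * f0 + t * f1 := by
    refine (pow_le_pow_iff_left₀ hf (by positivity) two_ne_zero).1 ?_
    nlinarith [mul_le_mul_of_nonneg_left hsq (mul_nonneg ht0 ht1)]
  nlinarith [mul_le_mul_of_nonneg_left hlin hc]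

/-- the pair (x,y) is separated by `o`, `m` is on the side of `x`, and `z` too. -/
lemma glue_ineq2 {L R c m0 d t s : ℝ} (hR : 0 ≤ R)
    (hsL : s * L = t * (L + R)) (ht : t ∈ Set.Icc (0 : ℝ) 1) (hLpos : 0 < L)
    (hm1 : L - c ≤ m0) (hm2 : c - L ≤ m0)
    (h : d ^ 2 ≤ (1 - s) * m0 ^ 2 + s * c ^ 2 - s * (1 - s) * L ^ 2) :
    d ^ 2 ≤ (1 - t) * m0 ^ 2 + t * (c + R) ^ 2 - t * (1 - t) * (L + R) ^ 2 := by
  have hsq : (L - c) ^ 2 ≤ m0 ^ 2 := sq_le_sq' (by linarith) hm1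
  have hts : t ≤ s := by
    have : t * L ≤ s * L := by rw [hsL]; nlinarith [ht.1]
    exact le_of_mul_le_mul_right this hLpos
  have key := mul_le_mul_of_nonneg_left hsq (sub_nonneg.2 hts)
  have : (1 - s) * (L - c) ^ 2 + s * c ^ 2 - s * (1 - s) * L ^ 2 =
      (1 - t) * (L - c) ^ 2 + t * (c + R) ^ 2 - t * (1 - t) * (L + R) ^ 2 := by
    have a1 : (1 - s) * (L - c) ^ 2 + s * c ^ 2 - s * (1 - s) * L ^ 2 = (s * L - (L - c)) ^ 2 := by
      ring
    have a2 : (1 - t) * (L - c) ^ 2 + t * (c + R) ^ 2 - t * (1 - t) * (L + R) ^ 2 =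
      (t * (L + R) - (L - c)) ^ 2 := by ring
    rw [a1, a2, hsL]
  nlinarith

lemma glue_ineq3 {L R c m0 d u t : ℝ} (ht : t ∈ Set.Icc (0 : ℝ) 1)
    (hu : u = t * (L + R) - L) (hm1 : L - c ≤ m0) (hm2 : c - L ≤ m0) (hd0 : 0 ≤ d)
    (hd : d ≤ c + u) :
    d ^ 2 ≤ (1 - t) * m0 ^ 2 + t * (c + R) ^ 2 - t * (1 - t) * (L + R) ^ 2 := by
  have hsq : (L - c) ^ 2 ≤ m0 ^ 2 := sq_le_sq' (by linarith) hm1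
  have hd2 : d ^ 2 ≤ (c + u) ^ 2 := by gcongr
  have a2 : (1 - t) * (L - c) ^ 2 + t * (c + R) ^ 2 - t * (1 - t) * (L + R) ^ 2 =
      (t * (L + R) - (L - c)) ^ 2 := by ring
  have a3 : (c + u) ^ 2 = (t * (L + R) - (L - c)) ^ 2 := by rw [hu]; ring
  nlinarith [mul_le_mul_of_nonneg_left hsq (sub_nonneg.2 ht.2)]


lemma glue_mem {A : Type*} [MetricSpace A] {S T : Set A} {o : A} (hoS : o ∈ S)
    (hd : ∀ a ∈ S, ∀ b ∈ T, dist a b = dist a o + dist o b) {x y m : A}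
    (hx : x ∈ S) (hy : y ∈ S) (hm : m ∈ S ∪ T) (h : dist x m + dist m y = dist x y) : m ∈ S := by
  rcases hm with hm | hm
  · exact hm
  · have h1 := hd x hx m hm
    have h2 := hd y hy m hm
    have h3 := dist_triangle x o y
    have h4 := dist_comm o y
    have h5 := dist_comm m y
    have h6 : dist o m = 0 := le_antisymm (by linarith) dist_nonneg
    rwa [← dist_eq_zero.1 h6]

lemma glue_same {A : Type*} [MetricSpace A] {S T : Set A} {o : A} (hS : CATSet S)
    (hoS : o ∈ S) (hd : ∀ a ∈ S, ∀ b ∈ T, dist a b = dist a o + dist o b) {x y z m : A}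
    (hx : x ∈ S) (hy : y ∈ S) (hz : z ∈ S ∪ T) (hm : m ∈ S ∪ T) {t : ℝ}
    (ht : t ∈ Set.Icc (0 : ℝ) 1)
    (h1 : dist x m = t * dist x y) (h2 : dist m y = (1 - t) * dist x y) :
    dist z m ^ 2 ≤ (1 - t) * dist z x ^ 2 + t * dist z y ^ 2 - t * (1 - t) * dist x y ^ 2 := by
  have hmS : m ∈ S := glue_mem hoS hd hx hy hm (by rw [h1, h2]; ring)
  rcases hz with hz | hz
  · exact hS.2 x hx y hy z hz m hmS t ht h1 h2
  · have key := hS.2 x hx y hy o hoS m hmS t ht h1 h2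
    have e : ∀ a ∈ S, dist z a = dist z o + dist o a := by
      intro a ha
      rw [dist_comm z a, hd a ha z hz, dist_comm a o, dist_comm o z, add_comm]
    rw [e m hmS, e x hx, e y hy]
    have t1 := dist_triangle o y x
    have t2 := dist_triangle o x y
    rw [dist_comm y x] at t1
    exact glue_ineq1 ht dist_nonneg dist_nonneg dist_nonneg dist_nonneg (by linarith)
      (by linarith) key

lemma glue_cross {A : Type*} [MetricSpace A] {S T : Set A} {o : A} (hS : CATSet S)
    (hoS : o ∈ S) (hd : ∀ a ∈ S, ∀ b ∈ T, dist a b = dist a o + dist o b) {x y z m : A}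
    (hx : x ∈ S) (hy : y ∈ T) (hz : z ∈ S) (hm : m ∈ S ∪ T) {t : ℝ}
    (ht : t ∈ Set.Icc (0 : ℝ) 1)
    (h1 : dist x m = t * dist x y) (h2 : dist m y = (1 - t) * dist x y) :
    dist z m ^ 2 ≤ (1 - t) * dist z x ^ 2 + t * dist z y ^ 2 - t * (1 - t) * dist x y ^ 2 := by
  have hxy := hd x hx y hy
  have hzy := hd z hz y hy
  have hR : 0 ≤ dist o y := dist_nonneg
  have hL : 0 ≤ dist x o := dist_nonneg
  have m1 := dist_triangle x z o
  have m2 := dist_triangle z x o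
  rw [dist_comm x z] at m1
  rw [hxy] at h1 h2
  rw [hxy, hzy]
  have tri := dist_triangle z o m
  by_cases hc : m ∈ S ∧ 0 < dist x o
  · obtain ⟨hmS, hpos⟩ := hc
    have h3 := hd m hmS y hy
    have hmo : 0 ≤ dist m o := dist_nonneg
    have hs1 : t * (dist x o + dist o y) / dist x o ≤ 1 := by
      rw [div_le_one hpos]; nlinarith
    have hs0 : 0 ≤ t * (dist x o + dist o y) / dist x o :=
      div_nonneg (mul_nonneg ht.1 (by linarith)) hL
    have hsL : t * (dist x o + dist o y) / dist x o * dist x o = t * (dist x o + dist o y) := by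
      field_simp
    have key := hS.2 x hx o hoS z hz m hmS _ ⟨hs0, hs1⟩ (by rw [hsL, h1])
      (by rw [sub_mul, hsL]; linarith)
    exact glue_ineq2 hR hsL ht hpos (by linarith) (by linarith) key
  · have hu : dist o m = t * (dist x o + dist o y) - dist x o := by
      rcases hm with hm | hm
      · have h0 : dist x o = 0 := by
          by_contra hne
          exact hc ⟨hm, lt_of_le_of_ne hL (Ne.symm hne)⟩
        rw [← h1, ← dist_eq_zero.1 h0, dist_self, sub_zero]
      · have := hd x hx m hm
        linarith
    exact glue_ineq3 ht hu (by linarith) (by linarith) dist_nonneg tri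

/-- Gluing two CAT(0) sets at a point. -/
lemma CATSet.glue {A : Type*} [MetricSpace A] {S T : Set A} {o : A} (hS : CATSet S)
    (hT : CATSet T) (hoS : o ∈ S) (hoT : o ∈ T)
    (hd : ∀ a ∈ S, ∀ b ∈ T, dist a b = dist a o + dist o b) : CATSet (S ∪ T) := by
  have hd' : ∀ b ∈ T, ∀ a ∈ S, dist b a = dist b o + dist o a := by
    intro b hb a ha
    rw [dist_comm b a, hd a ha b hb, dist_comm a o, dist_comm o b, add_comm]
  constructor
  · rintro x (hx | hx) y (hy | hy)
    · obtain ⟨γ, a, b, c, d⟩ := hS.1 x hx y hy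
      exact ⟨γ, a, b, fun s hs => Or.inl (c s hs), d⟩
    · obtain ⟨γ₁, a0, a1, am, ag⟩ := hS.1 x hx o hoS
      obtain ⟨γ₂, b0, b1, bm, bg⟩ := hT.1 o hoT y hy
      obtain ⟨γ, c0, -, c1, cm, cg⟩ := geo_concat (hd x hx y hy) a0 a1 am ag b0 b1 bm bg
      exact ⟨γ, c0, c1, cm, cg⟩
    · obtain ⟨γ₁, a0, a1, am, ag⟩ := hT.1 x hx o hoT
      obtain ⟨γ₂, b0, b1, bm, bg⟩ := hS.1 o hoS y hy
      obtain ⟨γ, c0, -, c1, cm, cg⟩ := geo_concat (hd' x hx y hy) a0 a1 am ag b0 b1 bm bg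
      exact ⟨γ, c0, c1, fun s hs => (cm s hs).symm, cg⟩
    · obtain ⟨γ, a, b, c, d⟩ := hT.1 x hx y hy
      exact ⟨γ, a, b, fun s hs => Or.inr (c s hs), d⟩
  · intro x hx y hy z hz m hm t ht h1 h2
    have ht' : 1 - t ∈ Set.Icc (0 : ℝ) 1 := ⟨by linarith [ht.2], by linarith [ht.1]⟩
    have h1' : dist y m = (1 - t) * dist y x := by rw [dist_comm y m, dist_comm y x, h2]
    have h2' : dist m x = (1 - (1 - t)) * dist y x := by
      rw [dist_comm m x, dist_comm y x, h1]; ring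
    rcases hx with hx | hx <;> rcases hy with hy | hy
    · exact glue_same hS hoS hd hx hy hz hm ht h1 h2
    · rcases hz with hz | hz
      · exact glue_cross hS hoS hd hx hy hz hm ht h1 h2
      · have := glue_cross hT hoT hd' hy hx hz hm.symm ht' h1' h2'
        rw [dist_comm y x] at this
        linarith
    · rcases hz with hz | hz
      · have := glue_cross hS hoS hd hy hx hz hm ht' h1' h2'
        rw [dist_comm y x] at this
        linarith
      · exact glue_cross hT hoT hd' hx hy hz hm.symm ht h1 h2
    · exact glue_same hT hoT hd' hx hy hz.symm hm.symm ht h1 h2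


lemma powerseries_unique (c : ℕ → ℝ) (C : ℝ) (hc : ∀ n, |c n| ≤ C) (δ : ℝ) (hδ : 0 < δ)
    (h : ∀ x, 0 < x → x < δ → ∑' n, c n * x ^ n = 0) : ∀ n, c n = 0 := by
  set p := FormalMultilinearSeries.ofScalars ℝ c with hp
  have hr : ((1 : NNReal) : ENNReal) ≤ p.radius := by
    apply p.le_radius_of_bound C
    intro n
    rw [hp, FormalMultilinearSeries.ofScalars_norm]
    simpa using hc n
  have hpos : 0 < p.radius := lt_of_lt_of_le (by simp) hr
  have hps := p.hasFPowerSeriesOnBall hpos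
  have hsum : ∀ x, p.sum x = ∑' n, c n * x ^ n := by
    intro x
    have := FormalMultilinearSeries.ofScalars_sum_eq (E := ℝ) c x
    rw [FormalMultilinearSeries.ofScalarsSum] at this
    rw [hp, this]; simp [smul_eq_mul]
  have hfreq : ∃ᶠ z in nhdsWithin (0 : ℝ) {0}ᶜ, p.sum z = 0 := by
    have h1 : ∀ᶠ z in nhdsWithin (0 : ℝ) (Set.Ioi 0), p.sum z = 0 := by
      filter_upwards [Ioo_mem_nhdsGT hδ] with z hz
      rw [hsum]; exact h z hz.1 hz.2
    exact h1.frequently.filter_mono (nhdsWithin_mono _ (fun z hz => ne_of_gt hz))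
  have hev := hps.analyticAt.frequently_zero_iff_eventually_zero.1 hfreq
  have hz : p = 0 := (hps.hasFPowerSeriesAt.congr (g := 0) hev).eq_zero
  rw [hp, FormalMultilinearSeries.ofScalars_series_eq_zero] at hz
  exact fun n => congrFun hz n

/-- Profile functions -/
noncomputable def prof (a : ℕ → ℝ) (x : ℝ) : ℝ := ∑' k : ℕ, a k * (x - x ^ (k + 2) / (k + 2))

/-- Admissible coefficient sequences -/
def Adm (a : ℕ → ℝ) : Prop := ∀ k, 0 ≤ a k ∧ a k ≤ 1 / 4 * (1 / 2) ^ k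

lemma Adm.hasSum : HasSum (fun k : ℕ => (1 / 4 : ℝ) * (1 / 2) ^ k) (1 / 2) := by
  have := hasSum_geometric_two.mul_left (1 / 4 : ℝ)
  norm_num at this ⊢
  exact this

lemma Adm.summable {a : ℕ → ℝ} (ha : Adm a) : Summable a :=
  Summable.of_nonneg_of_le (fun k => (ha k).1) (fun k => (ha k).2) Adm.hasSum.summable

lemma term_nonneg (k : ℕ) {x : ℝ} (h0 : 0 ≤ x) (h1 : x ≤ 1) :
    0 ≤ x - x ^ (k + 2) / (k + 2) := by
  have : x ^ (k + 2) / (k + 2) ≤ x ^ (k + 2) := by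
    apply div_le_self (by positivity)
    have : (0 : ℝ) ≤ k := by positivity
    linarith
  have h2 : x ^ (k + 2) ≤ x := pow_le_of_le_one h0 h1 (by omega)
  linarith

lemma term_le (k : ℕ) {x : ℝ} (h0 : 0 ≤ x) : x - x ^ (k + 2) / (k + 2) ≤ x := by
  have : 0 ≤ x ^ (k + 2) / (k + 2) := by positivity
  linarith

lemma term_mono (k : ℕ) {x y : ℝ} (h0 : 0 ≤ x) (hxy : x ≤ y) (h1 : y ≤ 1) :
    x - x ^ (k + 2) / (k + 2) ≤ y - y ^ (k + 2) / (k + 2) := by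
  have h := abs_pow_sub_pow_le y x (k + 2)
  have hm : max |y| |x| ^ (k + 2 - 1) ≤ 1 := by
    apply pow_le_one₀ (by positivity)
    rw [abs_of_nonneg h0, abs_of_nonneg (h0.trans hxy)]
    exact max_le h1 (hxy.trans h1)
  have h2 : y ^ (k + 2) - x ^ (k + 2) ≤ (y - x) * (k + 2) := by
    calc _ ≤ _ := le_abs_self _
      _ ≤ _ := h
      _ ≤ |y - x| * ((k + 2 : ℕ) : ℝ) * 1 := by gcongr
      _ = _ := by rw [abs_of_nonneg (by linarith)]; push_cast; ring
  have h3 : y ^ (k + 2) / (k + 2) - x ^ (k + 2) / (k + 2) ≤ y - x := by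
    rw [← sub_div, div_le_iff₀ (by positivity)]; exact h2
  linarith

lemma prof_summable {a : ℕ → ℝ} (ha : Adm a) {x : ℝ} (h0 : 0 ≤ x) (h1 : x ≤ 1) :
    Summable (fun k : ℕ => a k * (x - x ^ (k + 2) / (k + 2))) := by
  refine Summable.of_nonneg_of_le (fun k => mul_nonneg (ha k).1 (term_nonneg k h0 h1))
    (fun k => ?_) (ha.summable.mul_right x)
  exact mul_le_mul_of_nonneg_left (term_le k h0) (ha k).1

lemma prof_zero (a : ℕ → ℝ) : prof a 0 = 0 := by simp [prof]

lemma prof_nonneg {a : ℕ → ℝ} (ha : Adm a) {x : ℝ} (h0 : 0 ≤ x) (h1 : x ≤ 1) :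
    0 ≤ prof a x :=
  tsum_nonneg (fun k => mul_nonneg (ha k).1 (term_nonneg k h0 h1))

lemma prof_le {a : ℕ → ℝ} (ha : Adm a) {x : ℝ} (h0 : 0 ≤ x) (h1 : x ≤ 1) :
    prof a x ≤ x / 2 := by
  have h2 : HasSum (fun k : ℕ => (1 / 4 : ℝ) * (1 / 2) ^ k * x) (1 / 2 * x) :=
    Adm.hasSum.mul_right x
  have := (prof_summable ha h0 h1).tsum_le_tsum (fun k => ?_) h2.summable
  · rw [h2.tsum_eq] at this
    unfold prof; linarith
  · exact mul_le_mul (ha k).2 (term_le k h0) (term_nonneg k h0 h1) (by positivity)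

lemma prof_mono {a : ℕ → ℝ} (ha : Adm a) {x y : ℝ} (h0 : 0 ≤ x) (hxy : x ≤ y) (h1 : y ≤ 1) :
    prof a x ≤ prof a y :=
  (prof_summable ha h0 (hxy.trans h1)).tsum_le_tsum
    (fun k => mul_le_mul_of_nonneg_left (term_mono k h0 hxy h1) (ha k).1)
    (prof_summable ha (h0.trans hxy) h1)

lemma prof_concave {a : ℕ → ℝ} (ha : Adm a) : ConcaveOn ℝ (Set.Icc 0 1) (prof a) := by
  refine ⟨convex_Icc 0 1, ?_⟩
  intro x hx y hy s t hs ht hst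
  have hxy : s • x + t • y ∈ Set.Icc (0 : ℝ) 1 := convex_Icc 0 1 hx hy hs ht hst
  have e : s • prof a x + t • prof a y = ∑' k : ℕ,
      (s * (a k * (x - x ^ (k + 2) / (k + 2))) + t * (a k * (y - y ^ (k + 2) / (k + 2)))) := by
    rw [Summable.tsum_add ((prof_summable ha hx.1 hx.2).mul_left s)
      ((prof_summable ha hy.1 hy.2).mul_left t), tsum_mul_left, tsum_mul_left]
    rfl
  rw [e]
  refine Summable.tsum_le_tsum (fun k => ?_) (((prof_summable ha hx.1 hx.2).mul_left s).add
      ((prof_summable ha hy.1 hy.2).mul_left t)) (prof_summable ha hxy.1 hxy.2)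
  have hconv := (convexOn_pow (𝕜 := ℝ) (k + 2)).2 hx.1 hy.1 hs ht hst
  simp only [smul_eq_mul] at hconv ⊢
  have h3 : (s * x + t * y) ^ (k + 2) / (k + 2) ≤
      s * (x ^ (k + 2) / (k + 2)) + t * (y ^ (k + 2) / (k + 2)) := by
    rw [div_le_iff₀ (by positivity)]
    refine hconv.trans (le_of_eq ?_)
    field_simp
  nlinarith [mul_le_mul_of_nonneg_left h3 (ha k).1]

lemma prof_continuous {β : Type*} [TopologicalSpace β] (a : β → ℕ → ℝ) (x : β → ℝ)
    (ha : ∀ b, Adm (a b)) (hac : ∀ k, Continuous (fun b => a b k)) (hx : Continuous x)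
    (hx0 : ∀ b, 0 ≤ x b) (hx1 : ∀ b, x b ≤ 1) : Continuous (fun b => prof (a b) (x b)) := by
  unfold prof
  refine continuous_tsum (u := fun k : ℕ => (1 / 4 : ℝ) * (1 / 2) ^ k) (fun k => ?_)
    Adm.hasSum.summable (fun k b => ?_)
  · have := hac k
    fun_prop
  · rw [Real.norm_eq_abs, abs_of_nonneg (mul_nonneg (ha b k).1 (term_nonneg k (hx0 b) (hx1 b)))]
    calc _ ≤ a b k * 1 := mul_le_mul_of_nonneg_left
            ((term_le k (hx0 b)).trans (hx1 b)) (ha b k).1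
      _ ≤ _ := by rw [mul_one]; exact (ha b k).2

lemma prof_unique {a b : ℕ → ℝ} (ha : Adm a) (hb : Adm b) {δ : ℝ} (hδ : 0 < δ)
    (h : ∀ x, 0 < x → x < δ → prof a x = prof b x) : a = b := by
  have hd : Summable (fun k => a k - b k) := ha.summable.sub hb.summable
  let c : ℕ → ℝ := fun n => match n with
    | 0 => 0
    | 1 => ∑' k, (a k - b k)
    | (k + 2) => -((a k - b k) / (k + 2))
  have hdb : ∀ k, |a k - b k| ≤ 1 := by
    intro k
    have h1 : (1 / 4 : ℝ) * (1 / 2) ^ k ≤ 1 := by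
      have : ((1 : ℝ) / 2) ^ k ≤ 1 := pow_le_one₀ (by norm_num) (by norm_num)
      linarith
    rw [abs_le]
    constructor <;> linarith [(ha k).1, (ha k).2, (hb k).1, (hb k).2]
  have hdiv : ∀ k : ℕ, |(a k - b k) / (k + 2)| ≤ |a k - b k| := by
    intro k
    rw [abs_div]
    apply div_le_self (abs_nonneg _)
    rw [abs_of_nonneg (by positivity)]
    have : (0 : ℝ) ≤ k := by positivity
    linarith
  have hc : ∀ n, |c n| ≤ |∑' k, (a k - b k)| + 1 := by
    intro n
    match n with
    | 0 => simp only [c, abs_zero]; positivity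
    | 1 => simp only [c]; linarith
    | (k + 2) =>
      simp only [c, abs_neg]
      linarith [hdiv k, hdb k, abs_nonneg (∑' k, (a k - b k))]
  have hz := powerseries_unique c _ hc (min δ 1) (lt_min hδ one_pos) ?_
  · funext k
    have := hz (k + 2)
    simp only [c, neg_eq_zero, div_eq_zero_iff] at this
    rcases this with h | h
    · linarith
    · have : (0 : ℝ) ≤ k := by positivity
      linarith
  · intro x hx0 hx
    have hxδ := lt_of_lt_of_le hx (min_le_left _ _)
    have hx1 := (lt_of_lt_of_le hx (min_le_right _ _)).le
    have hs2 : Summable (fun k : ℕ => c (k + 2) * x ^ (k + 2)) := by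
      apply Summable.of_norm_bounded hd.abs
      intro k
      rw [Real.norm_eq_abs, abs_mul]
      simp only [c, abs_neg]
      have : |x ^ (k + 2)| ≤ 1 := by
        rw [abs_of_nonneg (by positivity)]; exact pow_le_one₀ hx0.le hx1
      calc _ ≤ |a k - b k| * 1 := by
            apply mul_le_mul (hdiv k) this (abs_nonneg _) (abs_nonneg _)
        _ = _ := mul_one _
    have hs : Summable (fun k : ℕ => c k * x ^ k) := (summable_nat_add_iff 2).1 hs2
    rw [← hs.sum_add_tsum_nat_add 2]
    simp only [Finset.sum_range_succ, Finset.sum_range_zero, c, zero_mul, zero_add, pow_one]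
    rw [← tsum_mul_right, ← Summable.tsum_add (hd.mul_right x) hs2]
    have hh := h x hx0 hxδ
    rw [← sub_eq_zero, prof, prof, ← (prof_summable ha hx0.le hx1).tsum_sub
      (prof_summable hb hx0.le hx1)] at hh
    rw [← hh]
    congr 1
    funext k
    simp only [c]
    ring


/-- The ambient space. -/
abbrev Amb (E : Type*) [NormedAddCommGroup E] : Type _ := WithLp 1 (ℂ × WithLp 1 (E × ℂ))

/-- Points of the ambient space. -/
def pt {E : Type*} [NormedAddCommGroup E] (a : ℂ) (x : E) (b : ℂ) : Amb E :=
  WithLp.toLp 1 (a, WithLp.toLp 1 (x, b))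

lemma dist_pt {E : Type*} [NormedAddCommGroup E] (a a' : ℂ) (x x' : E) (b b' : ℂ) :
    dist (pt a x b) (pt a' x' b') = dist a a' + (dist x x' + dist b b') := by
  rw [WithLp.prod_dist_eq_of_L1, WithLp.prod_dist_eq_of_L1]
  rfl

lemma pt_continuous {E β : Type*} [NormedAddCommGroup E] [TopologicalSpace β] {a b : β → ℂ}
    {x : β → E} (ha : Continuous a) (hx : Continuous x) (hb : Continuous b) :
    Continuous (fun s => pt (a s) (x s) (b s)) := by
  apply (WithLp.prod_continuous_toLp 1 _ _).comp
  exact ha.prodMk ((WithLp.prod_continuous_toLp 1 _ _).comp (hx.prodMk hb))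

/-- The decorated whisker. -/
def Wsk (a : ℕ → ℝ) (l : ℝ) : Set ℂ := {w | 0 ≤ w.re ∧ w.re ≤ l ∧ |w.im| ≤ prof a w.re}

lemma Wsk_convex {a : ℕ → ℝ} (ha : Adm a) {l : ℝ} (hl : l ≤ 1) : Convex ℝ (Wsk a l) := by
  intro z hz w hw s t hs ht hst
  obtain ⟨z0, z1, z2⟩ := hz
  obtain ⟨w0, w1, w2⟩ := hw
  have hre : (s • z + t • w).re = s • z.re + t • w.re := by simp
  have him : (s • z + t • w).im = s • z.im + t • w.im := by simp
  have hm := convex_Icc 0 l ⟨z0, z1⟩ ⟨w0, w1⟩ hs ht hst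
  have hc := (prof_concave ha).2 ⟨z0, z1.trans hl⟩ ⟨w0, w1.trans hl⟩ hs ht hst
  refine ⟨hre ▸ hm.1, hre ▸ hm.2, ?_⟩
  rw [hre, him]
  refine le_trans ?_ hc
  simp only [smul_eq_mul]
  calc _ ≤ |s * z.im| + |t * w.im| := abs_add_le _ _
    _ = s * |z.im| + t * |w.im| := by rw [abs_mul, abs_mul, abs_of_nonneg hs, abs_of_nonneg ht]
    _ ≤ _ := by gcongr

lemma tip_mem (a : ℕ → ℝ) {l : ℝ} (hl : 0 ≤ l) : (0 : ℂ) ∈ Wsk a l := by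
  simp [Wsk, prof_zero, hl]

lemma base_mem {a : ℕ → ℝ} (ha : Adm a) {l : ℝ} (hl : 0 ≤ l) (hl1 : l ≤ 1) :
    (l : ℂ) ∈ Wsk a l := by
  simp [Wsk, hl, prof_nonneg ha hl hl1]

lemma dist_sq_complex (z w : ℂ) : dist z w ^ 2 = (z.re - w.re) ^ 2 + (z.im - w.im) ^ 2 := by
  rw [Complex.dist_eq_re_im, Real.sq_sqrt (by positivity)]

lemma Wsk_im_sq {a : ℕ → ℝ} {l : ℝ} {w : ℂ} (hw : w ∈ Wsk a l) :
    w.im ^ 2 ≤ prof a w.re ^ 2 := by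
  rw [← sq_abs]
  exact pow_le_pow_left₀ (abs_nonneg _) hw.2.2 2

lemma Wsk_key {a : ℕ → ℝ} (ha : Adm a) {l : ℝ} (hl1 : l ≤ 1) {w : ℂ} (hw : w ∈ Wsk a l) :
    dist w l ^ 2 + w.re ^ 2 / 2 ≤ l ^ 2 := by
  obtain ⟨h0, h1, h2⟩ := id hw
  have h3 := prof_le ha h0 (h1.trans hl1)
  have h4 := prof_nonneg ha h0 (h1.trans hl1)
  have h5 := Wsk_im_sq hw
  rw [dist_sq_complex]
  simp only [Complex.ofReal_re, Complex.ofReal_im, sub_zero]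
  nlinarith

lemma Wsk_far {a : ℕ → ℝ} (ha : Adm a) {l : ℝ} (hl : 0 ≤ l) (hl1 : l ≤ 1) {w : ℂ}
    (hw : w ∈ Wsk a l) : dist w l ≤ l := by
  have := Wsk_key ha hl1 hw
  refine (pow_le_pow_iff_left₀ dist_nonneg hl two_ne_zero).1 ?_
  nlinarith [sq_nonneg w.re]

lemma Wsk_far_eq {a : ℕ → ℝ} (ha : Adm a) {l : ℝ} (hl1 : l ≤ 1) {w : ℂ}
    (hw : w ∈ Wsk a l) (h : l ≤ dist w l) : w = 0 := by
  have h1 := Wsk_key ha hl1 hw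
  have h0 : 0 ≤ l := hw.1.trans hw.2.1
  have h2 : w.re ^ 2 = 0 := by nlinarith [sq_nonneg w.re]
  have h3 : w.re = 0 := by simpa using h2
  have h4 := hw.2.2
  rw [h3, prof_zero] at h4
  exact Complex.ext h3 (abs_nonpos_iff.1 h4)

/-- The embedded whisker 1 -/
noncomputable def j1 (E : Type*) [NormedAddCommGroup E] (l : ℝ) (w : ℂ) : Amb E := pt (w - l) 0 0

/-- The embedded whisker 2 -/
noncomputable def j2 {E : Type*} [NormedAddCommGroup E] (l : ℝ) (q : E) (w : ℂ) : Amb E :=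
  pt 0 q (w - l)

/-- The embedded core -/
def jc {E : Type*} [NormedAddCommGroup E] (x : E) : Amb E := pt 0 x 0

section geom
variable {E : Type*} [NormedAddCommGroup E]

lemma j1_isometry (l : ℝ) : Isometry (j1 E l) :=
  Isometry.of_dist_eq fun x y => by simp [j1, dist_pt]

lemma j2_isometry (l : ℝ) (q : E) : Isometry (j2 l q) :=
  Isometry.of_dist_eq fun x y => by simp [j2, dist_pt]

lemma j1_dist (l : ℝ) (x y : ℂ) : dist (j1 E l x) (j1 E l y) = dist x y :=
  (j1_isometry (E := E) l).dist_eq x y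

lemma j2_dist (l : ℝ) (q : E) (x y : ℂ) : dist (j2 l q x) (j2 l q y) = dist x y :=
  (j2_isometry l q).dist_eq x y

/-- The glued set -/
def Zset (a : ℕ → ℝ) (l : ℝ) (K : Set E) (q : E) : Set (Amb E) :=
  (j1 E l '' Wsk a l ∪ jc '' K) ∪ j2 l q '' Wsk a l

lemma dist_sub_zero' (w : ℂ) (l : ℝ) : dist (w - l) 0 = dist w l := by
  rw [dist_zero_right, dist_eq_norm]

lemma Zset_cat {a : ℕ → ℝ} (ha : Adm a) {l : ℝ} (hl : 0 ≤ l) (hl1 : l ≤ 1) {K : Set E} {q : E}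
    (h0 : (0 : E) ∈ K) (hq : q ∈ K) (hK : CATSet (jc '' K)) : CATSet (Zset a l K q) := by
  have hb := base_mem ha hl hl1
  have hconv := Wsk_convex ha hl1
  have d0 : ∀ w : ℂ, dist (0 : ℂ) (w - l) = dist w l := fun w => by
    rw [dist_comm, dist_sub_zero']
  have d1 : ∀ w : ℂ, dist (w - l) (0 : ℂ) = dist w l := fun w => dist_sub_zero' w l
  refine CATSet.glue (o := jc q) (CATSet.glue (o := jc 0)
    (CATSet.of_convex hconv _ (j1_isometry l)) hK ⟨l, hb, by simp [j1, jc]⟩ ⟨0, h0, rfl⟩ ?_)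
    (CATSet.of_convex hconv _ (j2_isometry l q)) (Or.inr ⟨q, hq, rfl⟩)
    ⟨l, hb, by simp [j2, jc]⟩ ?_
  · rintro _ ⟨w, hw, rfl⟩ _ ⟨x, hx, rfl⟩
    simp only [j1, jc, dist_pt, dist_self]; ring
  · rintro _ (⟨w, hw, rfl⟩ | ⟨x, hx, rfl⟩) _ ⟨w', hw', rfl⟩
    · simp only [j1, j2, jc, dist_pt, dist_self]; ring
    · simp only [j2, jc, dist_pt, dist_self]; ring

lemma Zset_diam {a : ℕ → ℝ} (ha : Adm a) {l : ℝ} (hl : 0 < l) (hl1 : l ≤ 1) {K : Set E} {q : E}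
    (h0 : (0 : E) ∈ K) (hq : q ∈ K) (hK : ∀ x ∈ K, ∀ y ∈ K, dist x y ≤ dist 0 q) {z w : Amb E}
    (hz : z ∈ Zset a l K q) (hw : w ∈ Zset a l K q) :
    dist z w ≤ 2 * l + dist 0 q ∧ (2 * l + dist 0 q ≤ dist z w →
      z = j1 E l 0 ∨ z = j2 l q 0) := by
  have d0 : ∀ w : ℂ, dist (0 : ℂ) (w - l) = dist w l := fun w => by
    rw [dist_comm, dist_sub_zero']
  have d1 : ∀ w : ℂ, dist (w - l) (0 : ℂ) = dist w l := fun w => dist_sub_zero' w l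
  have d2 : ∀ w w' : ℂ, dist (w - l) (w' - l) = dist w w' := fun w w' => by simp
  have hf : ∀ w ∈ Wsk a l, dist w l ≤ l := fun w hw => Wsk_far ha hl.le hl1 hw
  have hfe : ∀ w ∈ Wsk a l, l ≤ dist w l → w = 0 := fun w hw => Wsk_far_eq ha hl1 hw
  have hq0 : 0 ≤ dist 0 q := dist_nonneg
  rcases hz with (⟨z, hz, rfl⟩ | ⟨z, hz, rfl⟩) | ⟨z, hz, rfl⟩ <;>
  rcases hw with (⟨w, hw, rfl⟩ | ⟨w, hw, rfl⟩) | ⟨w, hw, rfl⟩ <;>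
  simp only [j1, j2, jc, dist_pt, dist_self, d0, d1, d2, add_zero, zero_add]
  · have h1 := dist_triangle_right z w l
    have h2 := hf z hz
    have h3 := hf w hw
    refine ⟨by linarith, fun h => Or.inl ?_⟩
    rw [hfe z hz (by linarith)]
  · have h2 := hf z hz
    have h3 := hK 0 h0 w hw
    exact ⟨by linarith, fun h => by linarith⟩
  · have h2 := hf z hz
    have h3 := hf w hw
    refine ⟨by linarith, fun h => Or.inl ?_⟩
    rw [hfe z hz (by linarith)]
  · have h2 := hf w hw
    have h3 := hK z hz 0 h0
    exact ⟨by linarith, fun h => by linarith⟩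
  · have h3 := hK z hz w hw
    exact ⟨by linarith, fun h => by linarith⟩
  · have h2 := hf w hw
    have h3 := hK z hz q hq
    exact ⟨by linarith, fun h => by linarith⟩
  · have h2 := hf z hz
    have h3 := hf w hw
    rw [dist_comm q 0]
    refine ⟨by linarith, fun h => Or.inr ?_⟩
    rw [hfe z hz (by linarith)]
  · have h2 := hf z hz
    have h3 := hK q hq w hw
    exact ⟨by linarith, fun h => by linarith⟩
  · have h1 := dist_triangle_right z w l
    have h2 := hf z hz
    have h3 := hf w hw
    refine ⟨by linarith, fun h => Or.inr ?_⟩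
    rw [hfe z hz (by linarith)]

lemma Zset_near1 {a : ℕ → ℝ} {l : ℝ} (hl : 0 < l) {K : Set E} {q : E} {z : Amb E}
    (hz : z ∈ Zset a l K q) (h : dist (j1 E l 0) z < l) : ∃ w ∈ Wsk a l, z = j1 E l w := by
  rcases hz with (⟨z, hz, rfl⟩ | ⟨z, hz, rfl⟩) | ⟨z, hz, rfl⟩
  · exact ⟨z, hz, rfl⟩
  · exfalso
    simp [j1, jc, dist_pt, abs_of_pos hl] at h
    linarith [norm_nonneg z]
  · exfalso
    simp only [j1, j2, dist_pt, zero_sub, dist_zero_right, norm_neg, Complex.norm_real,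
      Real.norm_eq_abs, abs_of_pos hl] at h
    linarith [dist_nonneg (x := (0 : E)) (y := q), dist_nonneg (x := (0 : ℂ)) (y := z - l)]

lemma Zset_near2 {a : ℕ → ℝ} {l : ℝ} (hl : 0 < l) {K : Set E} {q : E} {z : Amb E}
    (hz : z ∈ Zset a l K q) (h : dist (j2 l q 0) z < l) : ∃ w ∈ Wsk a l, z = j2 l q w := by
  rcases hz with (⟨z, hz, rfl⟩ | ⟨z, hz, rfl⟩) | ⟨z, hz, rfl⟩
  · exfalso
    simp only [j1, j2, dist_pt, zero_sub, dist_zero_right, norm_neg, Complex.norm_real,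
      Real.norm_eq_abs, abs_of_pos hl] at h
    linarith [norm_nonneg q, dist_nonneg (x := (0 : ℂ)) (y := z - l)]
  · exfalso
    simp [j2, jc, dist_pt, abs_of_pos hl] at h
    linarith [dist_nonneg (x := q) (y := z)]
  · exact ⟨z, hz, rfl⟩

lemma prof_compare {a : ℕ → ℝ} (ha : Adm a) {l : ℝ} {z w : ℂ}
    (hz : z ∈ Wsk a l) (hw : w ∈ Wsk a l) {x y : ℝ} (hx : 0 ≤ x) (hx1 : x ≤ 1) (hy : 0 ≤ y)
    (h1 : dist 0 z ^ 2 = x ^ 2 + y ^ 2) (h2 : dist 0 w ^ 2 = x ^ 2 + y ^ 2)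
    (h3 : dist z w = 2 * y) : y ≤ prof a x := by
  by_contra! hlt
  have key : ∀ u ∈ Wsk a l, dist 0 u ^ 2 = x ^ 2 + y ^ 2 → x < u.re := by
    intro u hu hd
    by_contra! hux
    have e1 := prof_mono ha hu.1 hux hx1
    have e2 := Wsk_im_sq hu
    have e3 := prof_nonneg ha hu.1 (hux.trans hx1)
    have e4 := hu.1
    rw [dist_sq_complex] at hd
    simp at hd
    nlinarith
  have kz := key z hz h1
  have kw := key w hw h2
  have h3' : dist z w ^ 2 = 4 * y ^ 2 := by rw [h3]; ring
  rw [dist_sq_complex] at h1 h2 h3'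
  simp at h1 h2
  nlinarith [sq_nonneg (z.im + w.im)]

lemma Zset_compare {E' : Type*} [NormedAddCommGroup E'] {a a' : ℕ → ℝ} (ha : Adm a)
    (ha' : Adm a') {l l' : ℝ} (hl : 0 < l)
    (hl1 : l ≤ 1) (hl' : 0 < l') (hl1' : l' ≤ 1) {K : Set E} {q : E} {K' : Set E'} {q' : E'}
    (h0' : (0 : E') ∈ K') (hq' : q' ∈ K')
    (hK' : ∀ x ∈ K', ∀ y ∈ K', dist x y ≤ dist 0 q')
    (f : Zset a l K q → Zset a' l' K' q') (hf : Isometry f)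
    (hD : 2 * l + dist 0 q = 2 * l' + dist 0 q') {x : ℝ} (hx : 0 < x) (hxl : 2 * x < l)
    (hxl' : 2 * x < l') : prof a x ≤ prof a' x := by
  have hd : ∀ u v, dist ((f u : Zset a' l' K' q') : Amb E') (f v) = dist (u : Amb E) v := by
    intro u v
    rw [← Subtype.dist_eq, hf.dist_eq, Subtype.dist_eq]
  have hx1 : x ≤ 1 := by linarith
  have hp0 := prof_nonneg ha hx.le hx1
  have hp1 := prof_le ha hx.le hx1
  set y := prof a x with hy
  have m1 : ∀ w ∈ Wsk a l, j1 E l w ∈ Zset a l K q := fun w hw => Or.inl (Or.inl ⟨w, hw, rfl⟩)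
  have me : j2 l q 0 ∈ Zset a l K q := Or.inr ⟨0, tip_mem a hl.le, rfl⟩
  have hu : (⟨x, y⟩ : ℂ) ∈ Wsk a l := ⟨hx.le, by simp; linarith, by simpa using (abs_of_nonneg hp0).le⟩
  have hv : (⟨x, -y⟩ : ℂ) ∈ Wsk a l := ⟨hx.le, by simp; linarith, by simpa using (abs_of_nonneg hp0).le⟩
  have ht := tip_mem a hl.le
  let T : Zset a l K q := ⟨_, m1 _ ht⟩
  let U : Zset a l K q := ⟨_, m1 _ hu⟩
  let V : Zset a l K q := ⟨_, m1 _ hv⟩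
  let T2 : Zset a l K q := ⟨_, me⟩
  have dTT : dist (T : Amb E) T2 = 2 * l + dist 0 q := by
    simp [T, T2, j1, j2, dist_pt, abs_of_pos hl]; ring
  have dTU : dist (T : Amb E) U ^ 2 = x ^ 2 + y ^ 2 := by
    simp only [T, U, j1_dist, dist_sq_complex]; simp
  have dTV : dist (T : Amb E) V ^ 2 = x ^ 2 + y ^ 2 := by
    simp only [T, V, j1_dist, dist_sq_complex]; simp
  have dUV : dist (U : Amb E) V = 2 * y := by
    simp only [U, V, j1_dist]
    refine (pow_left_inj₀ dist_nonneg (by positivity) two_ne_zero).1 ?_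
    rw [dist_sq_complex]; simp; ring
  have small : ∀ r : ℝ, r ^ 2 = x ^ 2 + y ^ 2 → r < l' := by
    intro r hr
    by_contra! h
    nlinarith
  rw [← hd] at dTT dTU dTV dUV
  rcases (Zset_diam ha' hl' hl1' h0' hq' hK' (f T).2 (f T2).2).2 (by rw [dTT, hD]) with h | h
  · rw [h] at dTU dTV
    obtain ⟨u, hu', eu⟩ := Zset_near1 hl' (f U).2 (small _ dTU)
    obtain ⟨v, hv', ev⟩ := Zset_near1 hl' (f V).2 (small _ dTV)
    rw [eu, j1_dist] at dTU
    rw [ev, j1_dist] at dTV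
    rw [eu, ev, j1_dist] at dUV
    exact prof_compare ha' hu' hv' hx.le hx1 hp0 dTU dTV dUV
  · rw [h] at dTU dTV
    obtain ⟨u, hu', eu⟩ := Zset_near2 hl' (f U).2 (small _ dTU)
    obtain ⟨v, hv', ev⟩ := Zset_near2 hl' (f V).2 (small _ dTV)
    rw [eu, j2_dist] at dTU
    rw [ev, j2_dist] at dTV
    rw [eu, ev, j2_dist] at dUV
    exact prof_compare ha' hu' hv' hx.le hx1 hp0 dTU dTV dUV

lemma Zset_diam_le {E' : Type*} [NormedAddCommGroup E'] {a a' : ℕ → ℝ}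
    (ha' : Adm a') {l l' : ℝ} (hl : 0 < l)
    (hl' : 0 < l') (hl1' : l' ≤ 1) {K : Set E} {q : E} {K' : Set E'} {q' : E'}
    (h0' : (0 : E') ∈ K') (hq' : q' ∈ K')
    (hK' : ∀ x ∈ K', ∀ y ∈ K', dist x y ≤ dist 0 q')
    (f : Zset a l K q → Zset a' l' K' q') (hf : Isometry f) :
    2 * l + dist 0 q ≤ 2 * l' + dist 0 q' := by
  let T : Zset a l K q := ⟨j1 E l 0, Or.inl (Or.inl ⟨0, tip_mem a hl.le, rfl⟩)⟩
  let T2 : Zset a l K q := ⟨j2 l q 0, Or.inr ⟨0, tip_mem a hl.le, rfl⟩⟩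
  have dTT : dist (T : Amb E) T2 = 2 * l + dist 0 q := by
    simp [T, T2, j1, j2, dist_pt, abs_of_pos hl]; ring
  have := (Zset_diam ha' hl' hl1' h0' hq' hK' (f T).2 (f T2).2).1
  rw [← Subtype.dist_eq, hf.dist_eq, Subtype.dist_eq, dTT] at this
  exact this

lemma Zset_inj {E' : Type*} [NormedAddCommGroup E'] {a a' : ℕ → ℝ} (ha : Adm a)
    (ha' : Adm a') {l l' : ℝ} (hl : 0 < l)
    (hl1 : l ≤ 1) (hl' : 0 < l') (hl1' : l' ≤ 1) {K : Set E} {q : E} {K' : Set E'} {q' : E'}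
    (h0 : (0 : E) ∈ K) (hq : q ∈ K) (hK : ∀ x ∈ K, ∀ y ∈ K, dist x y ≤ dist 0 q)
    (h0' : (0 : E') ∈ K') (hq' : q' ∈ K')
    (hK' : ∀ x ∈ K', ∀ y ∈ K', dist x y ≤ dist 0 q')
    (f : Zset a l K q ≃ᵢ Zset a' l' K' q') : a = a' := by
  have hD : 2 * l + dist 0 q = 2 * l' + dist 0 q' := le_antisymm
    (Zset_diam_le ha' hl hl' hl1' h0' hq' hK' f f.isometry)
    (Zset_diam_le ha hl' hl hl1 h0 hq hK f.symm f.symm.isometry)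
  refine prof_unique ha ha' (δ := min l l' / 2) (by positivity) ?_
  intro x hx hxl
  have h1 := min_le_left l l'
  have h2 := min_le_right l l'
  apply le_antisymm
  · exact Zset_compare ha ha' hl hl1 hl' hl1' h0' hq' hK' f f.isometry hD hx (by linarith)
      (by linarith)
  · exact Zset_compare ha' ha hl' hl1' hl hl1 h0 hq hK f.symm f.symm.isometry hD.symm hx
      (by linarith) (by linarith)

end geom


/-- Hausdorff continuity of a family of sets -/
def HCont {H A : Type*} [TopologicalSpace H] [MetricSpace A] (Z : H → Set A) : Prop :=
  ∀ h : H, ∀ ε > 0, ∀ᶠ h' in nhds h,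
    (∀ x ∈ Z h, ∃ y ∈ Z h', dist x y ≤ ε) ∧ (∀ x ∈ Z h', ∃ y ∈ Z h, dist x y ≤ ε)

lemma HCont.union {H A : Type*} [TopologicalSpace H] [MetricSpace A] {Y Z : H → Set A}
    (hY : HCont Y) (hZ : HCont Z) : HCont (fun h => Y h ∪ Z h) := by
  intro h ε hε
  filter_upwards [hY h ε hε, hZ h ε hε] with h' h1 h2
  constructor
  · rintro x (hx | hx)
    · obtain ⟨y, hy, hd⟩ := h1.1 x hx
      exact ⟨y, Or.inl hy, hd⟩
    · obtain ⟨y, hy, hd⟩ := h2.1 x hx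
      exact ⟨y, Or.inr hy, hd⟩
  · rintro x (hx | hx)
    · obtain ⟨y, hy, hd⟩ := h1.2 x hx
      exact ⟨y, Or.inl hy, hd⟩
    · obtain ⟨y, hy, hd⟩ := h2.2 x hx
      exact ⟨y, Or.inr hy, hd⟩

lemma HCont.of_param {H P A : Type*} [TopologicalSpace H] [TopologicalSpace P] [CompactSpace P]
    [MetricSpace A] (F : H × P → A) (hF : Continuous F) :
    HCont (fun h => Set.range (fun p => F (h, p))) := by
  intro h ε hε
  let G : C(H, C(P, A)) := ContinuousMap.curry ⟨F, hF⟩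
  have := Metric.tendsto_nhds.1 (G.continuous.tendsto h) ε hε
  filter_upwards [this] with h' hh'
  have hd : ∀ p, dist (F (h', p)) (F (h, p)) ≤ ε := fun p =>
    (ContinuousMap.dist_apply_le_dist (f := G h') (g := G h) p).trans hh'.le
  constructor
  · rintro _ ⟨p, rfl⟩
    exact ⟨_, ⟨p, rfl⟩, by rw [dist_comm]; exact hd p⟩
  · rintro _ ⟨p, rfl⟩
    exact ⟨_, ⟨p, rfl⟩, hd p⟩

lemma HCont.continuous {H A : Type*} [TopologicalSpace H] [MetricSpace A]
    (Z : H → TopologicalSpace.NonemptyCompacts A) (hZ : HCont (fun h => (Z h : Set A))) :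
    Continuous (fun h => (toGHSpace (Z h) : GHSpace)) := by
  rw [continuous_iff_continuousAt]
  intro h
  refine Metric.tendsto_nhds.2 fun ε hε => ?_
  filter_upwards [hZ h (ε / 2) (by linarith)] with h' hh
  have h1 : ghDist (Z h') (Z h) ≤ Metric.hausdorffDist (Set.range (Subtype.val : Z h' → A))
      (Set.range (Subtype.val : Z h → A)) :=
    ghDist_le_hausdorffDist isometry_subtype_coe isometry_subtype_coe
  have h2 : Metric.hausdorffDist (Set.range (Subtype.val : Z h' → A))
      (Set.range (Subtype.val : Z h → A)) ≤ ε / 2 := by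
    rw [Subtype.range_coe, Subtype.range_coe]
    exact Metric.hausdorffDist_le_of_mem_dist (by linarith) hh.2 hh.1
  have h3 : dist (toGHSpace (Z h')) (toGHSpace (Z h)) = ghDist (Z h') (Z h) := rfl
  rw [h3]
  exact h1.trans_lt (h2.trans_lt (half_lt_self hε))

lemma isometryEquiv_of_range {Y A : Type*} [MetricSpace A] [MetricSpace Y] {S : Set A}
    (g : Y → A) (hg : Isometry g) (h : S = Set.range g) : Nonempty (S ≃ᵢ Y) := by
  subst h
  exact ⟨hg.isometryEquivOnRange.symm⟩

lemma Wsk_param {a : ℕ → ℝ} (ha : Adm a) {l : ℝ} (hl : 0 ≤ l) (hl1 : l ≤ 1) :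
    Wsk a l = Set.range (fun p : Set.Icc (0 : ℝ) 1 × Set.Icc (-1 : ℝ) 1 =>
      (⟨l * p.1, p.2 * prof a (l * p.1)⟩ : ℂ)) := by
  ext w
  constructor
  · rintro ⟨h0, h1, h2⟩
    have hp := prof_nonneg ha h0 (h1.trans hl1)
    have hs : ∃ s : Set.Icc (0 : ℝ) 1, l * s = w.re := by
      rcases hl.eq_or_lt with hl | hl
      · exact ⟨⟨0, by simp⟩, by simp; linarith⟩
      · exact ⟨⟨w.re / l, div_nonneg h0 hl.le, (div_le_one hl).2 h1⟩, by simp; field_simp⟩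
    have ht : ∃ t : Set.Icc (-1 : ℝ) 1, t * prof a w.re = w.im := by
      rcases hp.eq_or_lt with hp | hp
      · rw [← hp] at h2
        exact ⟨⟨0, by simp⟩, by rw [abs_nonpos_iff.1 h2]; simp⟩
      · refine ⟨⟨w.im / prof a w.re, ?_⟩, by simp; field_simp⟩
        rw [Set.mem_Icc, ← abs_le, abs_div, abs_of_pos hp]
        exact (div_le_one hp).2 h2
    obtain ⟨s, hs⟩ := hs
    obtain ⟨t, ht⟩ := ht
    exact ⟨(s, t), Complex.ext hs (by simp [hs, ht])⟩
  · rintro ⟨⟨s, t⟩, rfl⟩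
    have h0 : 0 ≤ l * s := mul_nonneg hl s.2.1
    have h1 : l * s ≤ l := mul_le_of_le_one_right hl s.2.2
    have hp := prof_nonneg ha h0 (h1.trans hl1)
    refine ⟨h0, h1, ?_⟩
    simp only [abs_mul, abs_of_nonneg hp]
    exact mul_le_of_le_one_left hp (abs_le.2 t.2)

/-- Coefficients attached to a point. -/
noncomputable def coef {H : Type*} [MetricSpace H] (d : ℕ → H) (c : ℕ) (h : H) (k : ℕ) : ℝ :=
  1 / 4 * (1 / 2) ^ k * (match k with
    | 0 => 1 / ((c : ℝ) + 1)
    | (k + 1) => min 1 (dist h (d k)))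

lemma coef_adm {H : Type*} [MetricSpace H] (d : ℕ → H) (c : ℕ) (h : H) : Adm (coef d c h) := by
  intro k
  have key : ∀ b : ℝ, 0 ≤ b → b ≤ 1 → 0 ≤ 1 / 4 * (1 / 2) ^ k * b ∧
      1 / 4 * (1 / 2) ^ k * b ≤ 1 / 4 * (1 / 2 : ℝ) ^ k := fun b h0 h1 =>
    ⟨by positivity, mul_le_of_le_one_right (by positivity) h1⟩
  unfold coef
  apply key
  · cases k with
    | zero => simp only; positivity
    | succ k => simp only; positivity
  · cases k with
    | zero =>
      simp only
      rw [div_le_one (by positivity)]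
      have : (0 : ℝ) ≤ c := by positivity
      linarith
    | succ k => exact min_le_left _ _

lemma coef_cont {H : Type*} [MetricSpace H] (d : ℕ → H) (c : ℕ) (k : ℕ) :
    Continuous (fun h => coef d c h k) := by
  unfold coef
  cases k with
  | zero => simp only; fun_prop
  | succ k => simp only; fun_prop

lemma coef_inj {H : Type*} [MetricSpace H] (d : ℕ → H) (hd : DenseRange d) (c c' : ℕ) (h h' : H)
    (he : coef d c h = coef d c' h') : c = c' ∧ h = h' := by
  constructor
  · have := congrFun he 0
    simp [coef] at this
    exact this
  · have hk : ∀ k, min 1 (dist h (d k)) = min 1 (dist h' (d k)) := by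
      intro k
      have := congrFun he (k + 1)
      simp only [coef] at this
      exact mul_left_cancel₀ (by positivity) this
    by_contra hne
    have hpos : 0 < dist h h' := dist_pos.2 hne
    obtain ⟨k, hk1⟩ := hd.exists_dist_lt h (ε := min 1 (dist h h' / 2)) (by positivity)
    have h1 := lt_of_lt_of_le hk1 (min_le_left _ _)
    have h2 := lt_of_lt_of_le hk1 (min_le_right _ _)
    have h3 := hk k
    rw [min_eq_right h1.le] at h3
    have h4 : dist h' (d k) = dist h (d k) := by
      rcases min_choice 1 (dist h' (d k)) with h5 | h5 <;> rw [h5] at h3 <;> linarith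
    have := dist_triangle_right h h' (d k)
    linarith

/-- The Banach space in which everything is embedded. -/
abbrev Ell : Type := lp (fun _ : ℕ => ℝ) ⊤

lemma core_exists {H : Type*} [MetricSpace H]
    (n : ℕ) (v : Fin (n + 1) → H) (hv : Function.Injective v)
    (X : Fin (n + 1) → Type) [∀ i, MetricSpace (X i)] [∀ i, CompactSpace (X i)]
    [∀ i, Nonempty (X i)] (hcat : ∀ i, IsCAT0Space (X i)) :
    ∃ κ : H → (∀ i, X i) → Ell, Continuous (fun u : H × (∀ i, X i) => κ u.1 u.2) ∧
      ∃ p q : ∀ i, X i, ∀ h, κ h p = 0 ∧ (∀ x y, dist (κ h x) (κ h y) ≤ dist 0 (κ h q)) ∧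
        CATSet (jc '' Set.range (κ h)) ∧
        ∀ i, h = v i → ∃ f : X i → Ell, Isometry f ∧ Set.range (κ h) = Set.range f := by
  classical
  have hpq : ∀ i, ∃ u : X i × X i, ∀ x y : X i, dist x y ≤ dist u.1 u.2 := by
    intro i
    obtain ⟨u, -, hu⟩ := (isCompact_univ (X := X i × X i)).exists_isMaxOn
      ⟨(Classical.arbitrary _, Classical.arbitrary _), trivial⟩
      (continuous_dist (α := X i)).continuousOn
    exact ⟨u, fun x y => hu (Set.mem_univ (x, y))⟩
  choose u hu using hpq
  have hr : ∃ r > 0, ∀ i j, i ≠ j → 2 * r ≤ dist (v i) (v j) := by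
    let s : Finset (Fin (n + 1) × Fin (n + 1)) := Finset.univ.filter (fun a => a.1 ≠ a.2)
    rcases s.eq_empty_or_nonempty with hs | hs
    · refine ⟨1, one_pos, fun i j hij => ?_⟩
      have : (i, j) ∈ s := by simp [s, hij]
      rw [hs] at this
      simp at this
    · obtain ⟨a, ha, hmin⟩ := s.exists_min_image (fun a => dist (v a.1) (v a.2)) hs
      have hne : a.1 ≠ a.2 := by simpa [s] using ha
      refine ⟨dist (v a.1) (v a.2) / 2, half_pos (dist_pos.2 (hv.ne hne)), fun i j hij => ?_⟩
      have := hmin (i, j) (by simp [s, hij])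
      simp only at this
      linarith
  obtain ⟨r, hr, hrv⟩ := hr
  let ρ : Fin (n + 1) → H → ℝ := fun i h => max 0 (1 - dist h (v i) / r)
  have hρ0 : ∀ i h, 0 ≤ ρ i h := fun i h => le_max_left _ _
  have hρc : ∀ i, Continuous (ρ i) := fun i => by fun_prop
  have hρ1 : ∀ i, ρ i (v i) = 1 := fun i => by simp [ρ]
  have hρ_lt : ∀ i h, ρ i h ≠ 0 → dist h (v i) < r := by
    intro i h hne
    by_contra! hge
    apply hne
    apply max_eq_left
    have : 1 ≤ dist h (v i) / r := (one_le_div hr).2 hge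
    linarith
  have hρ_one : ∀ i j h, ρ i h ≠ 0 → ρ j h ≠ 0 → j = i := by
    intro i j h hi hj
    by_contra hne
    have h1 := hρ_lt i h hi
    have h2 := hρ_lt j h hj
    have h3 := hrv j i hne
    have h4 := dist_triangle_left (v j) (v i) h
    linarith
  have hρ_ex : ∀ h, ∃ i, ∀ j, j ≠ i → ρ j h = 0 := by
    intro h
    by_cases hh : ∃ i, ρ i h ≠ 0
    · obtain ⟨i, hi⟩ := hh
      refine ⟨i, fun j hj => ?_⟩
      by_contra hne
      exact hj (hρ_one i j h hi hne)
    · push Not at hh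
      exact ⟨0, fun j _ => hh j⟩
  let e : ∀ i, X i → Ell := fun i x => kuratowskiEmbedding (X i) x - kuratowskiEmbedding (X i) (u i).1
  have he : ∀ i, Isometry (e i) := fun i => by
    refine Isometry.of_dist_eq fun x y => ?_
    simp only [e, dist_sub_right]
    exact (kuratowskiEmbedding.isometry (X i)).dist_eq x y
  have he0 : ∀ i, e i (u i).1 = 0 := fun i => sub_self _
  let κ : H → (∀ i, X i) → Ell := fun h x => ∑ i, ρ i h • e i (x i)
  have hκ : ∀ h i, (∀ j, j ≠ i → ρ j h = 0) → ∀ x, κ h x = ρ i h • e i (x i) := by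
    intro h i hi x
    apply Finset.sum_eq_single i
    · intro j _ hj
      rw [hi j hj, zero_smul]
    · simp
  have hκr : ∀ h i, (∀ j, j ≠ i → ρ j h = 0) →
      Set.range (κ h) = Set.range (fun x => ρ i h • e i x) := by
    intro h i hi
    ext z
    constructor
    · rintro ⟨x, rfl⟩
      exact ⟨x i, (hκ h i hi x).symm⟩
    · rintro ⟨x, rfl⟩
      refine ⟨Function.update (fun i => (u i).1) i x, ?_⟩
      rw [hκ h i hi]
      simp
  have hed : ∀ h i (x y : X i), dist (ρ i h • e i x) (ρ i h • e i y) = ρ i h * dist x y := by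
    intro h i x y
    rw [dist_smul₀, (he i).dist_eq, Real.norm_eq_abs, abs_of_nonneg (hρ0 i h)]
  refine ⟨κ, ?_, fun i => (u i).1, fun i => (u i).2, fun h => ⟨?_, ?_, ?_, ?_⟩⟩
  · refine continuous_finsetSum _ fun i _ => ?_
    exact ((hρc i).comp continuous_fst).smul
      ((he i).continuous.comp ((continuous_apply i).comp continuous_snd))
  · simp [κ, he0]
  · obtain ⟨i, hi⟩ := hρ_ex h
    intro x y
    have e0 : (0 : Ell) = ρ i h • e i (u i).1 := by rw [he0, smul_zero]
    rw [hκ h i hi, hκ h i hi, hκ h i hi, e0, hed, hed]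
    exact mul_le_mul_of_nonneg_left (hu i _ _) (hρ0 i h)
  · obtain ⟨i, hi⟩ := hρ_ex h
    rw [hκr h i hi, ← Set.range_comp]
    refine CATSet.of_scaled (hcat i) _ (ρ i h) (hρ0 i h) fun x y => ?_
    simp only [Function.comp, jc, dist_pt, dist_self, hed]
    ring
  · rintro i rfl
    refine ⟨e i, he i, ?_⟩
    rw [hκr (v i) i]
    · simp [hρ1]
    · intro j hj
      by_contra hne
      exact hj (hρ_one i j (v i) (by rw [hρ1]; exact one_ne_zero) hne)

set_option maxHeartbeats 2000000 in
lemma main_metric {H : Type*} [MetricSpace H] [CompactSpace H]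
    (n : ℕ) (v : Fin (n + 1) → H) (hv : Function.Injective v)
    (X : Fin (n + 1) → Type) [∀ i, MetricSpace (X i)] [∀ i, CompactSpace (X i)]
    [∀ i, Nonempty (X i)]
    (hcat : ∀ i, IsCAT0Space (X i))
    (hdist : ∀ i j, i ≠ j → 0 < ghDist (X i) (X j)) :
    ∃ Φ : H → GHSpace,
      Topology.IsEmbedding Φ ∧
      (∀ h : H, IsCAT0Space (Φ h).Rep) ∧
      ∀ i, Φ (v i) = toGHSpace (X i) := by
  classical
  have : Nonempty H := ⟨v 0⟩
  let d : ℕ → H := TopologicalSpace.denseSeq H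
  have hd : DenseRange d := TopologicalSpace.denseRange_denseSeq H
  obtain ⟨κ, hκc, p, q, hκ⟩ := core_exists n v hv X hcat
  let l : H → ℝ := fun h => min 1 (Metric.infDist h (Set.range v))
  have hlc : Continuous l := continuous_const.min (Metric.continuous_infDist_pt _)
  have hl0 : ∀ h, 0 ≤ l h := fun h => le_min zero_le_one Metric.infDist_nonneg
  have hl1 : ∀ h, l h ≤ 1 := fun h => min_le_left _ _
  have hlv : ∀ i, l (v i) = 0 := fun i => by
    simp only [l]
    rw [Metric.infDist_zero_of_mem (Set.mem_range_self i)]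
    simp
  have hlpos : ∀ h, h ∉ Set.range v → 0 < l h := by
    intro h hh
    refine lt_min one_pos ?_
    exact ((Set.finite_range v).isClosed.notMem_iff_infDist_pos ⟨v 0, 0, rfl⟩).1 hh
  clear_value l d
  let Zs : ℕ → H → Set (Amb Ell) := fun c h =>
    Zset (coef d c h) (l h) (Set.range (κ h)) (κ h q)
  have hZs : ∀ c h, Zs c h =
      (Set.range (fun s : Set.Icc (0 : ℝ) 1 × Set.Icc (-1 : ℝ) 1 =>
        j1 Ell (l h) ⟨l h * s.1, s.2 * prof (coef d c h) (l h * s.1)⟩) ∪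
      Set.range (fun x => jc (κ h x))) ∪
      Set.range (fun s : Set.Icc (0 : ℝ) 1 × Set.Icc (-1 : ℝ) 1 =>
        j2 (l h) (κ h q) ⟨l h * s.1, s.2 * prof (coef d c h) (l h * s.1)⟩) := by
    intro c h
    simp only [Zs, Zset]
    rw [Wsk_param (coef_adm d c h) (hl0 h) (hl1 h), ← Set.range_comp, ← Set.range_comp,
      ← Set.range_comp]
    rfl
  have hwc : ∀ c, Continuous (fun u : H × (Set.Icc (0 : ℝ) 1 × Set.Icc (-1 : ℝ) 1) =>
      (⟨l u.1 * u.2.1, u.2.2 * prof (coef d c u.1) (l u.1 * u.2.1)⟩ : ℂ)) := by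
    intro c
    have hx : Continuous (fun u : H × (Set.Icc (0 : ℝ) 1 × Set.Icc (-1 : ℝ) 1) =>
      l u.1 * (u.2.1 : ℝ)) := by fun_prop
    have hp := prof_continuous (fun u : H × (Set.Icc (0 : ℝ) 1 × Set.Icc (-1 : ℝ) 1) =>
      coef d c u.1) (fun u => l u.1 * (u.2.1 : ℝ)) (fun u => coef_adm d c u.1)
      (fun k => (coef_cont d c k).comp continuous_fst) hx
      (fun u => mul_nonneg (hl0 _) u.2.1.2.1) (fun u => mul_le_one₀ (hl1 _) u.2.1.2.1 u.2.1.2.2)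
    have hy : Continuous (fun u : H × (Set.Icc (0 : ℝ) 1 × Set.Icc (-1 : ℝ) 1) =>
      (u.2.2 : ℝ) * prof (coef d c u.1) (l u.1 * u.2.1)) :=
        (continuous_subtype_val.comp (continuous_snd.comp continuous_snd)).mul hp
    exact Complex.equivRealProdCLM.symm.continuous.comp (hx.prodMk hy)
  have hlcc : ∀ {P : Type} [TopologicalSpace P], Continuous (fun u : H × P => ((l u.1 : ℝ) : ℂ)) :=
    fun {P} _ => Complex.continuous_ofReal.comp (hlc.comp continuous_fst)
  have hF1 : ∀ c, Continuous (fun u : H × (Set.Icc (0 : ℝ) 1 × Set.Icc (-1 : ℝ) 1) =>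
      j1 Ell (l u.1) ⟨l u.1 * u.2.1, u.2.2 * prof (coef d c u.1) (l u.1 * u.2.1)⟩) := fun c =>
    pt_continuous ((hwc c).sub hlcc) continuous_const continuous_const
  have hF2 : ∀ c, Continuous (fun u : H × (Set.Icc (0 : ℝ) 1 × Set.Icc (-1 : ℝ) 1) =>
      j2 (l u.1) (κ u.1 q)
        ⟨l u.1 * u.2.1, u.2.2 * prof (coef d c u.1) (l u.1 * u.2.1)⟩) := fun c =>
    pt_continuous continuous_const (hκc.comp (continuous_fst.prodMk continuous_const))
      ((hwc c).sub hlcc)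
  have hF3 : Continuous (fun u : H × (∀ i, X i) => jc (κ u.1 u.2)) :=
    pt_continuous continuous_const hκc continuous_const
  have hcomp : ∀ c h, IsCompact (Zs c h) := by
    intro c h
    rw [hZs]
    refine ((isCompact_range ?_).union (isCompact_range ?_)).union (isCompact_range ?_)
    · exact (hF1 c).comp (continuous_const.prodMk continuous_id)
    · exact hF3.comp (continuous_const.prodMk continuous_id)
    · exact (hF2 c).comp (continuous_const.prodMk continuous_id)
  have hne : ∀ c h, (Zs c h).Nonempty := fun c h =>
    ⟨jc (κ h p), Or.inl (Or.inr ⟨_, ⟨p, rfl⟩, rfl⟩)⟩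
  let Z : ℕ → H → TopologicalSpace.NonemptyCompacts (Amb Ell) := fun c h =>
    ⟨⟨Zs c h, hcomp c h⟩, hne c h⟩
  have hcont : ∀ c, Continuous (fun h => (toGHSpace (Z c h) : GHSpace)) := by
    intro c
    apply HCont.continuous
    have : (fun h => (Z c h : Set (Amb Ell))) = fun h => Zs c h := rfl
    rw [this]
    simp only [hZs]
    exact ((HCont.of_param _ (hF1 c)).union (HCont.of_param _ hF3)).union
      (HCont.of_param _ (hF2 c))
  have hzero : ∀ h, (0 : Ell) ∈ Set.range (κ h) := fun h => ⟨p, (hκ h).1⟩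
  have hqm : ∀ h, κ h q ∈ Set.range (κ h) := fun h => ⟨q, rfl⟩
  have hdi : ∀ h, ∀ x ∈ Set.range (κ h), ∀ y ∈ Set.range (κ h), dist x y ≤ dist 0 (κ h q) := by
    rintro h _ ⟨x, rfl⟩ _ ⟨y, rfl⟩
    exact (hκ h).2.1 x y
  have hZcat : ∀ c h, CATSet (Zs c h) := fun c h =>
    Zset_cat (coef_adm d c h) (hl0 h) (hl1 h) (hzero h) (hqm h) (hκ h).2.2.1
  have hinj : ∀ c c' h h', h ∉ Set.range v → h' ∉ Set.range v →
      toGHSpace (Z c h) = toGHSpace (Z c' h') → c = c' ∧ h = h' := by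
    intro c c' h h' hh hh' heq
    obtain ⟨f⟩ := toGHSpace_eq_toGHSpace_iff_isometryEquiv.1 heq
    have f' : Zs c h ≃ᵢ Zs c' h' := f
    exact coef_inj d hd c c' h h' (Zset_inj (coef_adm d c h) (coef_adm d c' h') (hlpos h hh)
      (hl1 h) (hlpos h' hh') (hl1 h') (hzero h) (hqm h) (hdi h) (hzero h') (hqm h') (hdi h') f')
  have hval : ∀ c i, toGHSpace (Z c (v i)) = toGHSpace (X i) := by
    intro c i
    rw [toGHSpace_eq_toGHSpace_iff_isometryEquiv]
    obtain ⟨f, hf, hfr⟩ := (hκ (v i)).2.2.2 i rfl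
    have hW : ∀ w ∈ Wsk (coef d c (v i)) (l (v i)), w = 0 := by
      intro w hw
      apply Wsk_far_eq (coef_adm d c (v i)) (hl1 _) hw
      rw [hlv]; exact dist_nonneg
    have hset : Zs c (v i) = Set.range (fun x => jc (f x)) := by
      have h1 : Set.range (fun x => jc (f x)) = jc '' Set.range (κ (v i)) := by
        rw [hfr, ← Set.range_comp]; rfl
      rw [h1]
      apply Set.Subset.antisymm
      · rintro _ ((⟨w, hw, rfl⟩ | hx) | ⟨w, hw, rfl⟩)
        · refine ⟨0, hzero _, ?_⟩
          rw [hW w hw, hlv]; simp [j1, jc]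
        · exact hx
        · refine ⟨_, hqm _, ?_⟩
          rw [hW w hw, hlv]; simp [j2, jc]
      · exact fun z hz => Or.inl (Or.inr hz)
    have hiso : Isometry (fun x => (jc (f x) : Amb Ell)) := Isometry.of_dist_eq fun x y => by
      simp [jc, dist_pt, hf.dist_eq]
    exact isometryEquiv_of_range _ hiso hset
  have hc : ∃ c, ∀ i h, h ∉ Set.range v → toGHSpace (Z c h) ≠ toGHSpace (X i) := by
    by_contra! hcon
    choose I hI using hcon
    choose hh hhv hhe using hI
    obtain ⟨c, c', hcc, hII⟩ := Finite.exists_ne_map_eq_of_infinite I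
    refine hcc (hinj c c' _ _ (hhv c) (hhv c') ?_).1
    rw [hhe c, hhe c', hII]
  obtain ⟨c, hc⟩ := hc
  refine ⟨fun h => toGHSpace (Z c h), ?_, ?_, hval c⟩
  · refine ((hcont c).isClosedEmbedding ?_).isEmbedding
    intro h h' heq
    simp only at heq
    by_cases hh : h ∈ Set.range v <;> by_cases hh' : h' ∈ Set.range v
    · obtain ⟨i, rfl⟩ := hh
      obtain ⟨j, rfl⟩ := hh'
      by_contra hne
      have hij : i ≠ j := fun h => hne (by rw [h])
      have h1 := hdist i j hij
      rw [hval, hval] at heq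
      have h2 : ghDist (X i) (X j) = 0 := by
        rw [ghDist, heq, dist_self]
      linarith
    · obtain ⟨i, rfl⟩ := hh
      rw [hval] at heq
      exact absurd heq.symm (hc i h' hh')
    · obtain ⟨i, rfl⟩ := hh'
      rw [hval] at heq
      exact absurd heq (hc i h hh)
    · exact (hinj c c h h' hh hh' heq).2
  · intro h
    have h1 : toGHSpace (toGHSpace (Z c h)).Rep = toGHSpace (Z c h) := GHSpace.toGHSpace_rep _
    obtain ⟨f⟩ := toGHSpace_eq_toGHSpace_iff_isometryEquiv.1 h1
    exact (hZcat c h).isCAT0 f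

/-- Let `H` be a compact metrizable space, `n ≥ 1`, and
`v 0, …, v n` be `n+1` distinct points of `H`.  Let `X 0, …, X n` be compact
CAT(0) (nonempty) metric spaces with positive pairwise Gromov–Hausdorff
distances.  Then there is a topological embedding `Φ` of `H` into the subset
`𝒵` of the Gromov–Hausdorff space consisting of compact CAT(0) metric spaces
such that `Φ (v i)` is the isometry class of `X i`. -/
theorem statement3 {H : Type*} [TopologicalSpace H] [CompactSpace H]
    [TopologicalSpace.MetrizableSpace H]
    (n : ℕ) (hn : 1 ≤ n) (v : Fin (n + 1) → H) (hv : Function.Injective v)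
    (X : Fin (n + 1) → Type) [∀ i, MetricSpace (X i)] [∀ i, CompactSpace (X i)]
    [∀ i, Nonempty (X i)]
    (hcat : ∀ i, IsCAT0Space (X i))
    (hdist : ∀ i j, i ≠ j → 0 < ghDist (X i) (X j)) :
    ∃ Φ : H → GHSpace,
      Topology.IsEmbedding Φ ∧
      (∀ h : H, IsCAT0Space (Φ h).Rep) ∧
      ∀ i, Φ (v i) = toGHSpace (X i) := by
  letI : MetricSpace H := TopologicalSpace.metrizableSpaceMetric H
  exact main_metric n v hv X hcat hdist
end

section
/- The set 𝒫 of all compact path-connected metric spaces is path-connected as a subspace of the Gromov–Hausdorff space, and every nonempty open subset of 𝒫 (in the subspace topology) has infinite covering dimension. -/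
open GromovHausdorff

/-- A topological space has covering dimension at most `n` if every open cover
admits an open refinement that still covers the space and in which every point
lies in at most `n + 1` members of the refinement. -/
def CovDimLE (X : Type*) [TopologicalSpace X] (n : ℕ) : Prop :=
  ∀ U : Set (Set X), (∀ u ∈ U, IsOpen u) → ⋃₀ U = Set.univ →
    ∃ V : Set (Set X), (∀ w ∈ V, IsOpen w) ∧ ⋃₀ V = Set.univ ∧
      (∀ w ∈ V, ∃ u ∈ U, w ⊆ u) ∧
      ∀ x : X, {w ∈ V | x ∈ w}.encard ≤ (n : ℕ∞) + 1

/-- The subset `𝒫` of the Gromov–Hausdorff space consisting of (isometry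
classes of) path-connected compact metric spaces. -/
def GHPathConnected : Set GHSpace := {p | PathConnectedSpace p.Rep}

namespace SpernerAux

def ind (a b : ℕ) : ℕ := if a ≤ b then 1 else 0

/-- vertices of the Kuhn simplex based at `x` with order `π` -/
def vtx {N : ℕ} (x : Fin N → ℕ) (π : Equiv.Perm (Fin N)) (j : Fin (N + 1)) : Fin N → ℕ :=
  fun i => x i + ind (j : ℕ) (π i : ℕ)

open Classical in
noncomputable def full {N : ℕ} (a : Fin N → Fin N) : ZMod 2 :=
  if Function.Injective a then 1 else 0

open Classical in
noncomputable def face {N : ℕ} (b : Fin N → Fin (N + 1)) : ZMod 2 :=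
  if Function.Injective b ∧ ∀ j, b j ≠ 0 then 1 else 0

theorem face_iff {N : ℕ} (a : Fin (N + 1) → Fin (N + 1)) (j : Fin (N + 1)) :
    (Function.Injective (fun i => a (j.succAbove i)) ∧ ∀ i, a (j.succAbove i) ≠ 0) ↔
      ((∀ p q, p ≠ j → q ≠ j → a p = a q → p = q) ∧ ∀ p, p ≠ j → a p ≠ 0) := by
  constructor
  · rintro ⟨h1, h2⟩
    refine ⟨fun p q hp hq h => ?_, fun p hp => ?_⟩
    · obtain ⟨p', rfl⟩ := Fin.exists_succAbove_eq hp
      obtain ⟨q', rfl⟩ := Fin.exists_succAbove_eq hq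
      rw [h1 h]
    · obtain ⟨p', rfl⟩ := Fin.exists_succAbove_eq hp
      exact h2 _
  · rintro ⟨h1, h2⟩
    refine ⟨fun p q h => ?_, fun p => h2 _ (Fin.succAbove_ne _ _)⟩
    exact Fin.succAbove_right_injective (h1 _ _ (Fin.succAbove_ne _ _) (Fin.succAbove_ne _ _) h)

theorem full_eq_sum {N : ℕ} (a : Fin (N + 1) → Fin (N + 1)) :
    full a = ∑ j : Fin (N + 1), face (fun i => a (j.succAbove i)) := by
  classical
  simp only [full, face, face_iff]
  by_cases ha : Function.Injective a
  · obtain ⟨j, hj⟩ := (Finite.injective_iff_surjective.mp ha) 0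
    rw [if_pos ha, Finset.sum_eq_single j]
    · rw [if_pos]
      refine ⟨fun p q _ _ h => ha h, fun p hp h => hp (ha (h.trans hj.symm))⟩
    · intro b _ hb
      rw [if_neg]
      rintro ⟨_, h⟩
      exact h j hb.symm hj
    · simp
  · rw [if_neg ha]
    simp only [Function.Injective, not_forall] at ha
    obtain ⟨p, q, hpq, hne⟩ := ha
    change p ≠ q at hne
    rw [Finset.sum_eq_add p q hne]
    · have : ((∀ r s, r ≠ p → s ≠ p → a r = a s → r = s) ∧ ∀ r, r ≠ p → a r ≠ 0) ↔
        ((∀ r s, r ≠ q → s ≠ q → a r = a s → r = s) ∧ ∀ r, r ≠ q → a r ≠ 0) := by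
        have key : ∀ p q : Fin (N+1), a p = a q → p ≠ q → 
          ((∀ r s, r ≠ p → s ≠ p → a r = a s → r = s) ∧ ∀ r, r ≠ p → a r ≠ 0) → 
          ((∀ r s, r ≠ q → s ≠ q → a r = a s → r = s) ∧ ∀ r, r ≠ q → a r ≠ 0) := by
          rintro p q hpq hne ⟨h1, h2⟩
          refine ⟨fun r s hr hs h => ?_, fun r hr => ?_⟩
          · by_cases hrp : r = p
            · by_cases hsp : s = p
              · rw [hrp, hsp]
              · exact absurd (h1 q s hne.symm hsp (by rw [← hpq, ← hrp, h])).symm hs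
            · by_cases hsp : s = p
              · exact absurd (h1 r q hrp hne.symm (by rw [← hpq, ← hsp, h])) hr
              · exact h1 r s hrp hsp h
          · by_cases hrp : r = p
            · rw [hrp, hpq]; exact h2 q hne.symm
            · exact h2 r hrp
        exact ⟨key p q hpq hne, key q p hpq.symm hne.symm⟩
      simp only [this]
      exact (CharTwo.add_self_eq_zero _).symm
    · rintro c _ ⟨hcp, hcq⟩
      rw [if_neg]
      rintro ⟨h, _⟩
      exact hne (h p q hcp.symm hcq.symm hpq)
    · simp
    · simp

theorem telescope (k : ℕ) (H : ℕ → ZMod 2) :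
    ∑ t : Fin k, (H (t + 1) + H t) = H k + H 0 := by
  rw [Fin.sum_univ_eq_sum_range (fun t => H (t + 1) + H t)]
  induction k with
  | zero => simp [CharTwo.add_self_eq_zero]
  | succ k ih =>
    rw [Finset.sum_range_succ, ih]
    have := CharTwo.add_self_eq_zero (H k)
    linear_combination this

/-- base points -/
def up {N k : ℕ} (x : Fin N → Fin k) : Fin N → ℕ := fun i => (x i : ℕ)

theorem telescope_box {M k : ℕ} (l : Fin (M + 1)) (h : (Fin (M + 1) → ℕ) → ZMod 2) :
    ∑ x : Fin (M + 1) → Fin k, (h (up x + Pi.single l 1) + h (up x)) =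
      ∑ y : Fin M → Fin k, (h (l.insertNth k (up y)) + h (l.insertNth 0 (up y))) := by
  rw [← Equiv.sum_comp (Fin.insertNthEquiv (fun _ => Fin k) l), Fintype.sum_prod_type,
    Finset.sum_comm]
  refine Finset.sum_congr rfl fun y _ => ?_
  have := telescope k (fun t => h (l.insertNth t (up y)))
  simp only [← this]
  refine Finset.sum_congr rfl fun t _ => ?_
  have e1 : up (Fin.insertNthEquiv (fun _ => Fin k) l (t, y)) = l.insertNth (α := fun _ => ℕ) (t : ℕ) (up y) := by
    ext i
    refine Fin.succAboveCases l ?_ (fun i => ?_) i <;> simp [up]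
  have e2 : l.insertNth (α := fun _ => ℕ) (t : ℕ) (up y) + Pi.single l 1 = l.insertNth (α := fun _ => ℕ) ((t : ℕ) + 1) (up y) := by
    ext i
    refine Fin.succAboveCases l ?_ (fun i => ?_) i <;> simp
  rw [e1, e2]

noncomputable def S {N : ℕ} (k : ℕ) (ℓ : (Fin N → ℕ) → Fin (N + 1)) : ZMod 2 :=
  ∑ π : Equiv.Perm (Fin N), ∑ x : Fin N → Fin k, full (fun j => ℓ (vtx (up x) π j))

/-- the contribution of the middle faces vanishes -/
theorem middle {M : ℕ} (ℓ : (Fin (M + 1) → ℕ) → Fin (M + 2)) (x : Fin (M + 1) → ℕ) (j : Fin M) :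
    ∑ π : Equiv.Perm (Fin (M + 1)),
      face (fun i => ℓ (vtx x π (j.succ.castSucc.succAbove i))) = 0 := by
  set sw : Equiv.Perm (Fin (M + 1)) := Equiv.swap j.castSucc j.succ
  have hne : j.castSucc ≠ j.succ := by simp [Fin.ext_iff]
  have hsw : sw ≠ 1 := by
    intro h
    exact hne (Equiv.swap_eq_refl_iff.mp h)
  refine Finset.sum_involution (fun π _ => sw * π) ?_ ?_ (by simp) ?_
  · intro π _
    have : ∀ i, vtx x (sw * π) (j.succ.castSucc.succAbove i) =
        vtx x π (j.succ.castSucc.succAbove i) := by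
      intro i
      have hi : j.succ.castSucc.succAbove i ≠ j.succ.castSucc := Fin.succAbove_ne _ _
      generalize j.succ.castSucc.succAbove i = q at hi
      ext c
      simp only [vtx, Equiv.Perm.mul_apply]
      congr 1
      have hq : (q : ℕ) ≠ j + 1 := fun h => hi (by ext; simpa using h)
      generalize π c = p
      by_cases h1 : p = j.castSucc
      · subst h1
        simp only [sw, Equiv.swap_apply_left]
        simp only [Fin.val_succ, Fin.val_castSucc]
        simp only [ind]; split_ifs <;> omega
      · by_cases h2 : p = j.succ
        · subst h2
          simp only [sw, Equiv.swap_apply_right]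
          simp only [Fin.val_succ, Fin.val_castSucc]
          simp only [ind]; split_ifs <;> omega
        · simp only [sw, Equiv.swap_apply_of_ne_of_ne h1 h2]
    simp only [this]
    exact CharTwo.add_self_eq_zero _
  · intro π _ _ h
    exact hsw (by simpa using h)
  · intro π _
    simp [sw, ← mul_assoc]

theorem lastFace {M : ℕ} (x : Fin (M + 1) → ℕ) (π : Equiv.Perm (Fin (M + 1))) (i : Fin (M + 1)) :
    vtx x π i.castSucc =
      vtx (x + Pi.single ((finRotate (M + 1) * π).symm 0) 1) (finRotate (M + 1) * π) i.succ := by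
  set l := (finRotate (M + 1) * π).symm 0 with hl
  have hl' : finRotate (M + 1) (π l) = 0 := by
    have : (finRotate (M + 1) * π) l = 0 := by rw [hl]; simp
    simpa using this
  have hl2 : π l = Fin.last M := by
    apply (finRotate (M + 1)).injective
    rw [hl', finRotate_last]
  ext c
  simp only [vtx, Pi.add_apply, Equiv.Perm.mul_apply]
  by_cases hc : c = l
  · subst hc
    rw [hl', hl2]
    have := i.2
    simp [ind]
    omega
  · have hp : π c ≠ Fin.last M := fun h => hc (π.injective (h.trans hl2.symm))
    rw [Pi.single_eq_of_ne hc]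
    have hlt : (π c : ℕ) < M := by
      have := (π c).2
      have : (π c : ℕ) ≠ M := fun h => hp (by ext; simpa using h)
      omega
    rw [coe_finRotate_of_ne_last hp]
    simp [ind]

theorem face_zero_of_ne_last {M : ℕ} (b : Fin (M+1) → Fin (M + 2)) (c : Fin (M + 2)) (hc : c ≠ 0)
    (h : ∀ j, b j ≠ c) : face b = 0 := by
  rw [face, if_neg]
  rintro ⟨h1, h2⟩
  have : Function.Injective (fun o : Option (Option (Fin (M+1))) =>
      match o with
      | none => 0
      | some none => c
      | some (some j) => b j) := by
    rintro (_ | _ | i) (_ | _ | j) hij <;> simp at hij ⊢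
    · exact hc hij.symm
    · exact h2 _ hij.symm
    · exact hc hij
    · exact h _ hij.symm
    · exact h2 _ hij
    · exact h _ hij
    · exact h1 hij
  have := Fintype.card_le_of_injective _ this
  simp at this

theorem S_succ {M k : ℕ} (ℓ : (Fin (M + 1) → ℕ) → Fin (M + 2)) :
    S k ℓ = ∑ π : Equiv.Perm (Fin (M + 1)), ∑ y : Fin M → Fin k,
      (face (fun i => ℓ (vtx ((π.symm 0).insertNth k (up y)) π i.succ)) +
        face (fun i => ℓ (vtx ((π.symm 0).insertNth 0 (up y)) π i.succ))) := by
  have htb := fun π : Equiv.Perm (Fin (M + 1)) =>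
    telescope_box (k := k) (π.symm 0) (fun x => face (fun i => ℓ (vtx x π (Fin.succ i))))
  simp only [← htb]
  simp only [S, full_eq_sum]
  simp only [Fin.sum_univ_succ (n := M + 1), Fin.sum_univ_castSucc (n := M), Finset.sum_add_distrib]
  have hm : ∑ π : Equiv.Perm (Fin (M + 1)), ∑ x : Fin (M + 1) → Fin k, ∑ j : Fin M,
      face (fun i => ℓ (vtx (up x) π (j.castSucc.succ.succAbove i))) = 0 := by
    rw [Finset.sum_comm]
    refine Finset.sum_eq_zero fun x _ => ?_
    rw [Finset.sum_comm]
    refine Finset.sum_eq_zero fun j _ => ?_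
    exact middle ℓ (up x) j
  rw [hm, zero_add, add_comm]
  congr 1
  conv_rhs => rw [← Equiv.sum_comp (Equiv.mulLeft (finRotate (M + 1)))]
  refine Finset.sum_congr rfl fun π _ => Finset.sum_congr rfl fun x _ => ?_
  simp only [Fin.succ_last, Fin.succAbove_last, lastFace, Equiv.coe_mulLeft]

theorem S_eq_one {N : ℕ} (k : ℕ) (ℓ : (Fin N → ℕ) → Fin (N + 1))
    (h0 : ∀ v i, v i = 0 → ℓ v ≠ i.castSucc) (hk : ∀ v i, v i = k → ℓ v ≠ Fin.last N) :
    S k ℓ = 1 := by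
  induction N with
  | zero =>
    simp only [S]
    simp [full, Function.injective_of_subsingleton]
  | succ M ih =>
    have hne : ∀ y : Fin M → ℕ, ℓ (Fin.cons 0 y) ≠ 0 := fun y => by
      simpa using h0 (Fin.cons 0 y) 0 (by simp)
    have := ih (fun y => (ℓ (Fin.cons 0 y)).pred (hne y))
      (fun v i hv h => h0 (Fin.cons 0 v) i.succ (by simpa using hv) (by
        rw [Fin.pred_eq_iff_eq_succ] at h
        rw [h]; ext; simp))
      (fun v i hv h => hk (Fin.cons 0 v) i.succ (by simpa using hv) (by
        rw [Fin.pred_eq_iff_eq_succ] at h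
        rw [h]; ext; simp))
    rw [← this, S_succ]
    have hconst : ∀ (π : Equiv.Perm (Fin (M + 1))) (t : ℕ) (y : Fin M → ℕ) (i : Fin (M + 1)),
        vtx ((π.symm 0).insertNth t y) π i.succ (π.symm 0) = t := by
      intro π t y i
      simp [vtx, ind]
    have htop : ∀ (π : Equiv.Perm (Fin (M + 1))) (y : Fin M → Fin k), 
        face (fun i => ℓ (vtx ((π.symm 0).insertNth k (up y)) π i.succ)) = 0 := by
      intro π y
      apply face_zero_of_ne_last _ (Fin.last _) (by simp [Fin.ext_iff])
      intro i
      exact hk _ _ (hconst π k _ i)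
    simp only [htop, zero_add]
    rw [← Equiv.sum_comp (Equiv.Perm.decomposeFin.symm), Fintype.sum_prod_type, Finset.sum_eq_single 0]
    · simp only [S]
      refine Finset.sum_congr rfl fun σ _ => Finset.sum_congr rfl fun y _ => ?_
      have e0 : (Equiv.Perm.decomposeFin.symm ((0 : Fin (M+1)), σ)).symm 0 = 0 := by
        rw [Equiv.symm_apply_eq]; simp
      rw [e0]
      have ev : ∀ i : Fin (M + 1), vtx ((0 : Fin (M+1)).insertNth 0 (up y))
          (Equiv.Perm.decomposeFin.symm (0, σ)) i.succ = Fin.cons 0 (vtx (up y) σ i) := by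
        intro i
        ext c
        refine Fin.cases ?_ (fun c => ?_) c
        · simp [vtx, ind]
        · simp [vtx, ind]
      simp only [ev, face, full]
      congr 1
      simp only [eq_iff_iff]
      constructor
      · rintro ⟨h, _⟩ i j hij
        apply h
        simpa using hij
      · intro h
        refine ⟨fun i j hij => h (by simpa using hij), fun j => hne _⟩
    · intro p _ hp
      refine Finset.sum_eq_zero fun σ _ => Finset.sum_eq_zero fun y _ => ?_
      set π := Equiv.Perm.decomposeFin.symm (p, σ) with hπ
      have hl : π.symm 0 ≠ 0 := by
        intro h
        rw [Equiv.symm_apply_eq] at h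
        rw [hπ] at h
        simp at h
        exact hp h.symm
      apply face_zero_of_ne_last _ (π.symm 0).castSucc
      · intro h
        exact hl (by simpa using h)
      · intro i
        exact h0 _ _ (hconst π 0 _ i)
    · simp

theorem exists_full {N : ℕ} (k : ℕ) (ℓ : (Fin N → ℕ) → Fin (N + 1))
    (h0 : ∀ v i, v i = 0 → ℓ v ≠ i.castSucc) (hk : ∀ v i, v i = k → ℓ v ≠ Fin.last N) :
    ∃ (x : Fin N → ℕ) (π : Equiv.Perm (Fin N)), Function.Injective fun j => ℓ (vtx x π j) := by
  by_contra! H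
  have := S_eq_one k ℓ h0 hk
  rw [S, Finset.sum_eq_zero] at this
  · exact zero_ne_one this
  · intro π _
    refine Finset.sum_eq_zero fun x _ => ?_
    rw [full, if_neg (H _ _)]

theorem not_covDimLE {Y : Type*} [TopologicalSpace Y] [T2Space Y] (n : ℕ)
    (φ : (Fin (n + 1) → unitInterval) → Y) (hφ : Continuous φ)
    (h : ∀ i x y, x i = 0 → y i = 1 → φ x ≠ φ y) : ¬ CovDimLE Y n := by
  classical
  intro hcov
  set A : Fin (n + 1) → Set Y := fun i => φ '' {x | x i = 0} with hA
  set B : Fin (n + 1) → Set Y := fun i => φ '' {x | x i = 1} with hB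
  have cA : ∀ i, IsClosed (A i) := fun i =>
    (((isClosed_singleton.preimage (continuous_apply i)).isCompact).image hφ).isClosed
  have cB : ∀ i, IsClosed (B i) := fun i =>
    (((isClosed_singleton.preimage (continuous_apply i)).isCompact).image hφ).isClosed
  have hAB : ∀ i y, y ∈ A i → y ∉ B i := by
    rintro i y ⟨x, hx, rfl⟩ ⟨x', hx', hxx⟩
    exact h i x x' hx hx' hxx.symm
  obtain ⟨V, hVo, hVc, hVU, hVn⟩ := hcov
    (Set.range fun s : Fin (n + 1) → Bool => ⋂ i, if s i then (A i)ᶜ else (B i)ᶜ)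
    (by
      rintro _ ⟨s, rfl⟩
      refine isOpen_iInter_of_finite fun i => ?_
      split_ifs
      · exact (cA i).isOpen_compl
      · exact (cB i).isOpen_compl)
    (by
      refine Set.eq_univ_of_forall fun y => ?_
      refine ⟨_, ⟨fun i => decide (y ∉ A i), rfl⟩, ?_⟩
      refine Set.mem_iInter.mpr fun i => ?_
      by_cases hy : y ∈ A i
      · simpa [hy] using hAB i y hy
      · simp [hy])
  -- colours
  have hcol : ∀ w : V, ∃ c : Fin (n + 2),
      (∀ i : Fin (n + 1), c = i.castSucc → Disjoint (w : Set Y) (A i)) ∧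
      (c = Fin.last (n + 1) → ∀ i, Disjoint (w : Set Y) (B i)) := by
    rintro ⟨w, hw⟩
    obtain ⟨_, ⟨s, rfl⟩, hws⟩ := hVU w hw
    by_cases hs : ∃ i, s i = true
    · obtain ⟨i, hi⟩ := hs
      refine ⟨i.castSucc, fun j hj => ?_, fun hl => ?_⟩
      · have : i = j := by simpa using hj
        subst this
        rw [Set.disjoint_left]
        intro y hy
        have := Set.mem_iInter.mp (hws hy) i
        simpa [hi] using this
      · exact absurd hl (Fin.castSucc_lt_last i).ne
    · refine ⟨Fin.last _, fun j hj => absurd hj (Fin.castSucc_lt_last j).ne', fun _ i => ?_⟩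
      rw [Set.disjoint_left]
      intro y hy
      have := Set.mem_iInter.mp (hws hy) i
      have hi : s i = false := by
        simpa using fun h' => hs ⟨i, h'⟩
      simpa [hi] using this
  choose col hcol0 hcol1 using hcol
  obtain ⟨δ, hδ, hL⟩ := lebesgue_number_lemma_of_metric
    (s := (Set.univ : Set (Fin (n + 1) → unitInterval))) (c := fun w : V => φ ⁻¹' (w : Set Y))
    isCompact_univ (fun w => (hVo w w.2).preimage hφ)
    (by
      intro x _
      have : φ x ∈ ⋃₀ V := by rw [hVc]; trivial
      obtain ⟨w, hw, hx⟩ := this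
      exact Set.mem_iUnion.mpr ⟨⟨w, hw⟩, hx⟩)
  obtain ⟨k, hk⟩ := exists_nat_one_div_lt hδ
  set gp : (Fin (n + 1) → ℕ) → Fin (n + 1) → unitInterval :=
    fun v i => Set.projIcc (0 : ℝ) 1 zero_le_one ((v i : ℝ) / ((k : ℝ) + 1)) with hgp
  have hkpos : (0 : ℝ) < (k : ℝ) + 1 := by positivity
  choose W hW using fun v => hL (gp v) (Set.mem_univ _)
  have hself : ∀ v, φ (gp v) ∈ (W v : Set Y) := fun v => hW v (Metric.mem_ball_self hδ)
  obtain ⟨x, π, hinj⟩ := exists_full (N := n + 1) (k + 1) (fun v => col (W v))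
    (by
      intro v i hv hc
      refine Set.disjoint_left.mp (hcol0 (W v) i hc) (hself v) ⟨gp v, ?_, rfl⟩
      simp [hgp, hv])
    (by
      intro v i hv hc
      refine Set.disjoint_left.mp (hcol1 (W v) hc i) (hself v) ⟨gp v, ?_, rfl⟩
      simp only [hgp, Set.mem_ofPred_eq, hv]
      push_cast
      rw [div_self hkpos.ne']
      exact Set.projIcc_right zero_le_one)
  have hmem : ∀ j, φ (gp x) ∈ (W (vtx x π j) : Set Y) := by
    intro j
    apply hW
    rw [Metric.mem_ball, dist_pi_lt_iff hδ]
    intro i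
    refine lt_of_le_of_lt ?_ hk
    have hle : dist (gp x i) (gp (vtx x π j) i) ≤
        dist ((x i : ℝ) / ((k : ℝ) + 1)) (((vtx x π j i : ℕ) : ℝ) / ((k : ℝ) + 1)) := by
      have := (LipschitzWith.projIcc (zero_le_one (α := ℝ))).dist_le_mul
        ((x i : ℝ) / ((k : ℝ) + 1)) (((vtx x π j i : ℕ) : ℝ) / ((k : ℝ) + 1))
      simpa using this
    refine hle.trans ?_
    rw [Real.dist_eq, ← sub_div, abs_div, abs_of_pos hkpos]
    refine div_le_div_of_nonneg_right ?_ hkpos.le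
    simp only [vtx, ind]
    split_ifs <;> simp
  have hcard := hVn (φ (gp x))
  have hsub : Set.range (fun j => (W (vtx x π j) : Set Y)) ⊆ {w ∈ V | φ (gp x) ∈ w} := by
    rintro _ ⟨j, rfl⟩
    exact ⟨(W _).2, hmem j⟩
  have hinj2 : Function.Injective (fun j => (W (vtx x π j) : Set Y)) := by
    intro a b hab
    exact hinj (congrArg col (Subtype.ext hab))
  have h1 := (Set.encard_le_encard hsub).trans hcard
  rw [← Set.image_univ, hinj2.encard_image, Set.encard_univ] at h1
  simp at h1
  norm_cast at h1
  omega

end SpernerAux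
namespace GHAux

open Metric Set

/-- range of a continuous map from a compact space -/
def rangeNC {W E : Type*} [TopologicalSpace W] [CompactSpace W] [Nonempty W] [MetricSpace E]
    (f : C(W, E)) : TopologicalSpace.NonemptyCompacts E :=
  ⟨⟨Set.range f, isCompact_range f.continuous⟩, Set.range_nonempty f⟩

theorem coe_rangeNC {W E : Type*} [TopologicalSpace W] [CompactSpace W] [Nonempty W]
    [MetricSpace E] (f : C(W, E)) : (rangeNC f : Set E) = Set.range f := rfl

theorem rangeNC_lipschitz {W E : Type*} [TopologicalSpace W] [CompactSpace W] [Nonempty W]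
    [MetricSpace E] : LipschitzWith 1 (rangeNC : C(W, E) → _) := by
  refine LipschitzWith.of_dist_le_mul fun f g => ?_
  rw [NNReal.coe_one, one_mul, NonemptyCompacts.dist_eq]
  refine hausdorffDist_le_of_mem_dist dist_nonneg ?_ ?_
  · rintro _ ⟨w, rfl⟩
    exact ⟨g w, ⟨w, rfl⟩, ContinuousMap.dist_apply_le_dist w⟩
  · rintro _ ⟨w, rfl⟩
    refine ⟨f w, ⟨w, rfl⟩, ?_⟩
    rw [dist_comm]
    exact ContinuousMap.dist_apply_le_dist w

theorem continuous_rangeNC {A W E : Type*} [TopologicalSpace A] [TopologicalSpace W]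
    [CompactSpace W] [Nonempty W] [MetricSpace E] (F : C(A × W, E)) :
    Continuous fun a => rangeNC (F.curry a) :=
  rangeNC_lipschitz.continuous.comp F.curry.continuous

theorem mem_gh_iff (Y : Type*) [MetricSpace Y] [CompactSpace Y] [Nonempty Y] :
    toGHSpace Y ∈ GHPathConnected ↔ PathConnectedSpace Y := by
  have h : toGHSpace (toGHSpace Y).Rep = toGHSpace Y := GHSpace.toGHSpace_rep _
  rw [toGHSpace_eq_toGHSpace_iff_isometryEquiv] at h
  obtain ⟨e⟩ := h
  constructor
  · intro (_ : PathConnectedSpace _)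
    exact e.surjective.pathConnectedSpace e.continuous
  · intro _
    exact e.symm.surjective.pathConnectedSpace e.symm.continuous

theorem range_mem {E : Type*} [MetricSpace E] (s : TopologicalSpace.NonemptyCompacts E)
    (hs : IsPathConnected (s : Set E)) : s.toGHSpace ∈ GHPathConnected :=
  (mem_gh_iff s).mpr (isPathConnected_iff_pathConnectedSpace.mp hs)

noncomputable def ptGH : GHSpace := toGHSpace PUnit.{1}

theorem joined_pt (p : ↥GHPathConnected) :
    Joined p ⟨ptGH, (mem_gh_iff _).mpr inferInstance⟩ := by
  have : PathConnectedSpace (p : GHSpace).Rep := p.2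
  let X := (p : GHSpace).Rep
  let κ : X → lp (fun _ : ℕ => ℝ) ⊤ := kuratowskiEmbedding X
  have hκ : Isometry κ := kuratowskiEmbedding.isometry X
  let F : C(unitInterval × X, lp (fun _ : ℕ => ℝ) ⊤) :=
    ⟨fun a => (1 - (a.1 : ℝ)) • κ a.2, by
      have := hκ.continuous
      fun_prop⟩
  have hmem : ∀ t, (rangeNC (F.curry t)).toGHSpace ∈ GHPathConnected := fun t =>
    range_mem _ (isPathConnected_range (F.curry t).continuous)
  refine ⟨⟨⟨fun t => ⟨(rangeNC (F.curry t)).toGHSpace, hmem t⟩, ?_⟩, ?_, ?_⟩⟩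
  · exact (toGHSpace_continuous.comp (continuous_rangeNC F)).subtype_mk _
  · apply Subtype.ext
    change toGHSpace (rangeNC (F.curry 0)) = p
    refine Eq.trans ?_ (GHSpace.toGHSpace_rep (p : GHSpace))
    rw [toGHSpace_eq_toGHSpace_iff_isometryEquiv]
    have hr : Set.range κ = (rangeNC (F.curry 0) : Set _) := by
      rw [coe_rangeNC]
      congr 1
      ext1 x
      simp [F]
    exact ⟨((hκ.isometryEquivOnRange).trans (IsometryEquiv.mk (Equiv.setCongr hr) (fun _ _ => rfl))).symm⟩
  · apply Subtype.ext
    change toGHSpace (rangeNC (F.curry 1)) = toGHSpace PUnit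
    rw [toGHSpace_eq_toGHSpace_iff_isometryEquiv]
    have hz : ∀ y : rangeNC (F.curry 1), (y : lp (fun _ : ℕ => ℝ) ⊤) = 0 := by
      rintro ⟨_, ⟨x, rfl⟩⟩
      simp [F]
    have : Unique (rangeNC (F.curry 1)) :=
      { default := Classical.arbitrary _
        uniq := fun y => Subtype.ext ((hz y).trans (hz _).symm) }
    exact ⟨⟨Equiv.ofUnique _ _, isometry_subsingleton⟩⟩

theorem part_one : PathConnectedSpace ↥GHPathConnected where
  nonempty := ⟨⟨ptGH, (mem_gh_iff _).mpr inferInstance⟩⟩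
  joined p q := (joined_pt p).trans (joined_pt q).symm

/-! ### invariants -/

/-- points all of whose balls have Hausdorff dimension at least `d` -/
def DD (d : ℕ) (Y : Type*) [MetricSpace Y] : Set Y :=
  {z | ∀ r > 0, (d : ENNReal) ≤ dimH (ball z r)}

theorem diam_DD_congr {Y Y' : Type*} [MetricSpace Y] [MetricSpace Y'] (e : Y ≃ᵢ Y') (d : ℕ) :
    diam (DD d Y) = diam (DD d Y') := by
  rw [← e.isometry.diam_image]
  congr 1
  ext z
  constructor
  · rintro ⟨y, hy, rfl⟩ r hr
    rw [← e.image_ball, e.dimH_image]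
    exact hy r hr
  · intro hz
    refine ⟨e.symm z, fun r hr => ?_, by simp⟩
    rw [← e.symm.image_ball, e.symm.dimH_image]
    exact hz r hr

theorem diam_DD_coe {E : Type*} [MetricSpace E] (Z : Set E) (d : ℕ) :
    diam (DD d Z) = diam {z ∈ Z | ∀ r > 0, (d : ENNReal) ≤ dimH (ball z r ∩ Z)} := by
  rw [← isometry_subtype_coe.diam_image (f := ((↑) : Z → E))]
  congr 1
  have key : ∀ (z : Z) (r : ℝ), dimH (ball z r) = dimH (ball (z : E) r ∩ Z) := by
    intro z r
    rw [← (isometry_subtype_coe (s := Z)).dimH_image]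
    congr 1
    ext y
    simp
  ext z
  constructor
  · rintro ⟨y, hy, rfl⟩
    exact ⟨y.2, fun r hr => by rw [← key]; exact hy r hr⟩
  · rintro ⟨hz, h⟩
    exact ⟨⟨z, hz⟩, fun r hr => by rw [key]; exact h r hr, rfl⟩

/-- coordinate subspace -/
def L (M d : ℕ) : Set (Fin M → ℝ) := {y | ∀ i : Fin M, d ≤ i → y i = 0}

theorem dimH_L (M d : ℕ) : dimH (L M d) ≤ d := by
  let g : (Fin d → ℝ) → (Fin M → ℝ) := fun y i => if h : (i : ℕ) < d then y ⟨i, h⟩ else 0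
  have hg : LipschitzWith 1 g := by
    refine LipschitzWith.of_dist_le_mul fun x y => ?_
    rw [NNReal.coe_one, one_mul, dist_pi_le_iff dist_nonneg]
    intro i
    by_cases h : (i : ℕ) < d
    · simpa [g, h] using dist_le_pi_dist x y ⟨i, h⟩
    · simp [g, h]
  have hsub : L M d ⊆ g '' univ := by
    intro y hy
    by_cases hM : d ≤ M
    · refine ⟨fun i => y (Fin.castLE hM i), trivial, ?_⟩
      ext i
      by_cases h : (i : ℕ) < d
      · simp [g, h]
      · simpa [g, h] using (hy i (not_lt.mp h)).symm
    · refine ⟨fun i => if h : (i : ℕ) < M then y ⟨i, h⟩ else 0, trivial, ?_⟩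
      ext i
      have h : (i : ℕ) < d := by omega
      simp [g, h]
  calc dimH (L M d) ≤ dimH (g '' univ) := dimH_mono hsub
    _ ≤ dimH (univ : Set (Fin d → ℝ)) := hg.dimH_image_le _
    _ = d := Real.dimH_univ_pi_fin d

/-- coordinate cube -/
def cube {M : ℕ} (P : Fin M → ℝ) (d : ℕ) (s : ℝ) : Set (Fin M → ℝ) :=
  {y | ∀ i, P i ≤ y i ∧ y i ≤ P i + if (i : ℕ) < d then s else 0}

theorem isClosed_cube {M : ℕ} (P : Fin M → ℝ) (d : ℕ) (s : ℝ) : IsClosed (cube P d s) := by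
  have : cube P d s = Icc P (fun i => P i + if (i : ℕ) < d then s else 0) := by
    ext y
    simp [cube, Pi.le_def, forall_and]
  rw [this]
  exact isClosed_Icc

theorem le_dimH_cube {M : ℕ} (P : Fin M → ℝ) (d : ℕ) (hd : d ≤ M) (s : ℝ) (hs : 0 < s)
    (z : Fin M → ℝ) (hz : z ∈ cube P d s) (r : ℝ) (hr : 0 < r) :
    (d : ENNReal) ≤ dimH (ball z r ∩ cube P d s) := by
  let g : (Fin M → ℝ) → (Fin d → ℝ) := fun y i => y (Fin.castLE hd i)
  have hg : LipschitzWith 1 g := by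
    refine LipschitzWith.of_dist_le_mul fun x y => ?_
    rw [NNReal.coe_one, one_mul, dist_pi_le_iff dist_nonneg]
    intro i
    exact dist_le_pi_dist x y _
  set ρ : ℝ := min s r / 4 with hρ
  have hρ0 : 0 < ρ := by have := lt_min hs hr; positivity
  have hρs : 4 * ρ ≤ s := by have := min_le_left s r; rw [hρ]; linarith
  have hρr : 4 * ρ ≤ r := by have := min_le_right s r; rw [hρ]; linarith
  let w : Fin d → ℝ := fun i => max (P (Fin.castLE hd i) + ρ)
    (min (z (Fin.castLE hd i)) (P (Fin.castLE hd i) + s - ρ))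
  have hw : ∀ i, P (Fin.castLE hd i) + ρ ≤ w i ∧ w i ≤ P (Fin.castLE hd i) + s - ρ ∧
      |w i - z (Fin.castLE hd i)| ≤ ρ := by
    intro i
    have h1 := hz (Fin.castLE hd i)
    rw [if_pos (by simp)] at h1
    refine ⟨le_max_left _ _, max_le (by linarith) (min_le_right _ _), ?_⟩
    simp only [w]
    rw [abs_le]
    rcases max_cases (P (Fin.castLE hd i) + ρ)
      (min (z (Fin.castLE hd i)) (P (Fin.castLE hd i) + s - ρ)) with h | h <;>
    rcases min_cases (z (Fin.castLE hd i)) (P (Fin.castLE hd i) + s - ρ) with h' | h' <;>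
    constructor <;> linarith [h.1, h.2, h'.1, h'.2, h1.1, h1.2]
  have hsub : ball w ρ ⊆ g '' (ball z r ∩ cube P d s) := by
    intro y hy
    have hy' : ∀ i, |y i - w i| < ρ := fun i => by
      have := (dist_pi_lt_iff hρ0).mp (mem_ball.mp hy) i
      rwa [Real.dist_eq] at this
    refine ⟨fun i => if h : (i : ℕ) < d then y ⟨i, h⟩ else z i, ⟨?_, ?_⟩, ?_⟩
    · rw [mem_ball, dist_pi_lt_iff hr]
      intro i
      by_cases h : (i : ℕ) < d
      · have h1 := hy' ⟨i, h⟩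
        have h2 := (hw ⟨i, h⟩).2.2
        simp only [h, dif_pos, Real.dist_eq]
        rw [abs_lt] at h1 ⊢
        rw [abs_le] at h2
        simp only [Fin.castLE_mk, Fin.eta] at h2
        constructor <;> linarith [h1.1, h1.2, h2.1, h2.2]
      · simpa [h] using hr
    · intro i
      by_cases h : (i : ℕ) < d
      · have h1 := hy' ⟨i, h⟩
        have h2 := hw ⟨i, h⟩
        simp only [Fin.castLE_mk, Fin.eta] at h2
        simp only [h, dif_pos, if_pos]
        rw [abs_lt] at h1
        constructor <;> linarith [h1.1, h1.2, h2.1, h2.2.1]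
      · simpa only [h, dif_neg, not_false_iff, if_neg] using hz i
    · ext i
      simp [g]
  calc (d : ENNReal) = dimH (ball w ρ) := (Real.dimH_ball_pi_fin w hρ0).symm
    _ ≤ dimH (g '' (ball z r ∩ cube P d s)) := dimH_mono hsub
    _ ≤ _ := hg.dimH_image_le _

theorem diam_D {m N : ℕ} (K : Set (Fin (m + N) → ℝ)) (P : Fin (m + N) → ℝ) (s : Fin N → ℝ)
    (hs : ∀ i, 0 < s i) (hanti : Antitone s) (hK : K ⊆ L _ m) (hP : P ∈ L _ m)
    (Z : Set (Fin (m + N) → ℝ)) (hZ : Z = K ∪ ⋃ j : Fin N, cube P (m + j + 1) (s j)) (j : Fin N) :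
    diam {z ∈ Z | ∀ r > 0, ((m + j + 1 : ℕ) : ENNReal) ≤ dimH (ball z r ∩ Z)} = s j := by
  have hD : {z ∈ Z | ∀ r > 0, ((m + j + 1 : ℕ) : ENNReal) ≤ dimH (ball z r ∩ Z)} =
      ⋃ e : Fin N, ⋃ _ : j ≤ e, cube P (m + e + 1) (s e) := by
    ext z
    constructor
    · rintro ⟨hzZ, hz⟩
      by_contra hcon
      have hcl : IsClosed (⋃ e : Fin N, ⋃ _ : j ≤ e, cube P (m + e + 1) (s e)) :=
        isClosed_iUnion_of_finite fun e => isClosed_iUnion_of_finite fun _ => isClosed_cube _ _ _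
      obtain ⟨r, hr, hball⟩ := Metric.isOpen_iff.mp hcl.isOpen_compl z hcon
      have hsub : ball z r ∩ Z ⊆ L (m + N) (m + j) := by
        rintro y ⟨hy, hyZ⟩
        have hy2 := hball hy
        rw [hZ] at hyZ
        rcases hyZ with hyK | hyQ
        · intro i hi
          exact hK hyK i (by omega)
        · obtain ⟨e, he⟩ := mem_iUnion.mp hyQ
          have hej : e < j := by
            by_contra hle
            exact hy2 (mem_iUnion.mpr ⟨e, mem_iUnion.mpr ⟨not_lt.mp hle, he⟩⟩)
          have hej' : (e : ℕ) < j := hej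
          intro i hi
          have h1 := he i
          rw [if_neg (by omega), hP i (by omega)] at h1
          linarith [h1.1, h1.2]
      have h1 := (hz r hr).trans ((dimH_mono hsub).trans (dimH_L _ _))
      norm_cast at h1
      omega
    · intro hz
      obtain ⟨e, he⟩ := mem_iUnion.mp hz
      obtain ⟨hje, he⟩ := mem_iUnion.mp he
      have hsub : cube P (m + e + 1) (s e) ⊆ Z := by
        rw [hZ]
        exact fun y hy => Or.inr (mem_iUnion.mpr ⟨e, hy⟩)
      refine ⟨hsub he, fun r hr => ?_⟩
      have h1 := le_dimH_cube P (m + e + 1) (by omega) (s e) (hs e) z he r hr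
      refine le_trans ?_ (h1.trans (dimH_mono (inter_subset_inter_right _ hsub)))
      have : (j : ℕ) ≤ e := hje
      exact_mod_cast (by omega)
  rw [hD]
  have hbd : ∀ z ∈ (⋃ e : Fin N, ⋃ _ : j ≤ e, cube P (m + e + 1) (s e)),
      ∀ i, P i ≤ z i ∧ z i ≤ P i + s j := by
    intro z hz i
    obtain ⟨e, he⟩ := mem_iUnion.mp hz
    obtain ⟨hje, he⟩ := mem_iUnion.mp he
    refine ⟨(he i).1, (he i).2.trans ?_⟩
    have := hanti hje
    have := hs j
    split_ifs <;> linarith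
  have hdist : ∀ z ∈ (⋃ e : Fin N, ⋃ _ : j ≤ e, cube P (m + e + 1) (s e)),
      ∀ z' ∈ (⋃ e : Fin N, ⋃ _ : j ≤ e, cube P (m + e + 1) (s e)), dist z z' ≤ s j := by
    intro z hz z' hz'
    rw [dist_pi_le_iff (hs j).le]
    intro i
    rw [Real.dist_eq, abs_le]
    have h1 := hbd z hz i
    have h2 := hbd z' hz' i
    constructor <;> linarith [h1.1, h1.2, h2.1, h2.2]
  apply le_antisymm
  · exact diam_le_of_forall_dist_le (hs j).le hdist
  · have hbdd : Bornology.IsBounded (⋃ e : Fin N, ⋃ _ : j ≤ e, cube P (m + e + 1) (s e)) :=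
      isBounded_iff.mpr ⟨s j, fun z hz z' hz' => hdist z hz z' hz'⟩
    have hPm : P ∈ (⋃ e : Fin N, ⋃ _ : j ≤ e, cube P (m + e + 1) (s e)) := by
      refine mem_iUnion.mpr ⟨j, mem_iUnion.mpr ⟨le_rfl, fun i => ⟨le_rfl, ?_⟩⟩⟩
      have := hs j
      split_ifs <;> linarith
    have hPm' : (fun i : Fin (m + N) => P i + if (i : ℕ) < m + j + 1 then s j else 0) ∈
        (⋃ e : Fin N, ⋃ _ : j ≤ e, cube P (m + e + 1) (s e)) := by
      refine mem_iUnion.mpr ⟨j, mem_iUnion.mpr ⟨le_rfl, fun i => ⟨?_, le_rfl⟩⟩⟩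
      have := hs j
      dsimp only
      split_ifs <;> linarith
    refine le_trans ?_ (dist_le_diam_of_mem hbdd hPm hPm')
    have h3 := dist_le_pi_dist P
      (fun i : Fin (m + N) => P i + if (i : ℕ) < m + j + 1 then s j else 0) ⟨0, by have := j.isLt; omega⟩
    refine le_trans ?_ h3
    rw [Real.dist_eq]
    simp
    exact le_abs_self _

theorem inv_eq {E : Type*} [MetricSpace E] (Z Z' : TopologicalSpace.NonemptyCompacts E)
    (h : Z.toGHSpace = Z'.toGHSpace) (d : ℕ) :
    diam {z ∈ (Z : Set E) | ∀ r > 0, (d : ENNReal) ≤ dimH (ball z r ∩ Z)} =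
      diam {z ∈ (Z' : Set E) | ∀ r > 0, (d : ENNReal) ≤ dimH (ball z r ∩ Z')} := by
  have h' : toGHSpace Z = toGHSpace Z' := h
  rw [toGHSpace_eq_toGHSpace_iff_isometryEquiv] at h'
  obtain ⟨e⟩ := h'
  rw [← diam_DD_coe, ← diam_DD_coe]
  exact diam_DD_congr e d

theorem exists_net (X : Type*) [MetricSpace X] [CompactSpace X] [Nonempty X] (η : ℝ)
    (hη : 0 < η) : ∃ (m : ℕ) (q : ℕ → X), ∀ x, ∃ i < m, dist x (q i) ≤ η := by
  obtain ⟨t, ht⟩ := (isCompact_univ (X := X)).elim_finite_subcover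
    (fun n : ℕ => ball (TopologicalSpace.denseSeq X n) η) (fun _ => isOpen_ball)
    (fun x _ => by
      obtain ⟨_, ⟨n, rfl⟩, hn⟩ := (Metric.dense_iff.mp (TopologicalSpace.denseRange_denseSeq X)
        x η hη).imp fun _ h => And.symm h
      refine mem_iUnion.mpr ⟨n, ?_⟩
      rw [mem_ball, dist_comm]
      exact hn)
  refine ⟨t.sup id + 1, TopologicalSpace.denseSeq X, fun x => ?_⟩
  have hx := ht (mem_univ x)
  simp only [mem_iUnion] at hx
  obtain ⟨i, hi, hx⟩ := hx
  exact ⟨i, Nat.lt_succ_of_le (Finset.le_sup (f := id) hi), (mem_ball.mp hx).le⟩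

/-- sizes of the attached cubes -/
def sz (δ : ℝ) {N : ℕ} (x : Fin N → unitInterval) (j : Fin N) : ℝ :=
  δ * (2 * ((N : ℝ) - (j : ℕ)) + (x j : ℝ))

theorem sz_pos (δ : ℝ) (hδ : 0 < δ) {N : ℕ} (x : Fin N → unitInterval) (j : Fin N) :
    0 < sz δ x j := by
  have h1 : ((j : ℕ) : ℝ) < N := by exact_mod_cast j.2
  have h2 := (x j).2.1
  exact mul_pos hδ (by linarith)

theorem sz_le (δ : ℝ) (hδ : 0 < δ) {N : ℕ} (x : Fin N → unitInterval) (j : Fin N) :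
    sz δ x j ≤ δ * (2 * N + 1) := by
  have h1 : (0 : ℝ) ≤ ((j : ℕ) : ℝ) := by positivity
  have h2 := (x j).2.2
  exact mul_le_mul_of_nonneg_left (by linarith) hδ.le

theorem sz_anti (δ : ℝ) (hδ : 0 < δ) {N : ℕ} (x : Fin N → unitInterval) :
    Antitone (sz δ x) := by
  intro i j hij
  rcases hij.eq_or_lt with rfl | h
  · exact le_rfl
  · have h1 : ((i : ℕ) : ℝ) + 1 ≤ (j : ℕ) := by exact_mod_cast h
    have h2 := (x j).2.2
    have h3 := (x i).2.1
    exact mul_le_mul_of_nonneg_left (by linarith) hδ.le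

/-- the truncated Kuratowski map -/
def kur {X : Type*} [MetricSpace X] (m N : ℕ) (q : ℕ → X) (a : X) : Fin (m + N) → ℝ :=
  fun i => if (i : ℕ) < m then dist a (q i) else 0

/-- the model map -/
def FF {X : Type*} [MetricSpace X] (m N : ℕ) (q : ℕ → X) (δ : ℝ) :
    (Fin N → unitInterval) × (X ⊕ (Fin N × (Fin (m + N) → unitInterval))) → Fin (m + N) → ℝ :=
  fun p => Sum.elim (fun a => kur m N q a)
    (fun ju i => kur m N q (q 0) i +
      if (i : ℕ) < m + ju.1 + 1 then sz δ p.1 ju.1 * (ju.2 i : ℝ) else 0) p.2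

theorem continuous_kur {X : Type*} [MetricSpace X] (m N : ℕ) (q : ℕ → X) :
    Continuous (kur m N q) := by
  refine continuous_pi fun i => ?_
  unfold kur
  split_ifs <;> fun_prop

theorem continuous_FF {X : Type*} [MetricSpace X] (m N : ℕ) (q : ℕ → X) (δ : ℝ) :
    Continuous (FF m N q δ) := by
  have e : FF m N q δ = (Sum.elim (fun p : (Fin N → unitInterval) × X => kur m N q p.2)
      (fun p : (Fin N → unitInterval) × (Fin N × (Fin (m + N) → unitInterval)) =>
        fun i => kur m N q (q 0) i +
          if (i : ℕ) < m + p.2.1 + 1 then sz δ p.1 p.2.1 * (p.2.2 i : ℝ) else 0)) ∘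
      (Homeomorph.prodSumDistrib (X := Fin N → unitInterval) (Y := X)
        (Z := Fin N × (Fin (m + N) → unitInterval))) := by
    ext ⟨x, a | ju⟩ i <;> rfl
  rw [e]
  refine Continuous.comp ?_ (Homeomorph.continuous _)
  refine Continuous.sumElim ((continuous_kur m N q).comp continuous_snd) ?_
  have hd : ∀ j : Fin N, Continuous
      (fun p : (Fin N → unitInterval) × (Fin (m + N) → unitInterval) =>
        fun i : Fin (m + N) => kur m N q (q 0) i +
          if (i : ℕ) < m + j + 1 then sz δ p.1 j * (p.2 i : ℝ) else 0) := by
    intro j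
    refine continuous_pi fun i => ?_
    unfold sz
    split_ifs <;> fun_prop
  have hd2 : Continuous (fun p : Fin N × ((Fin N → unitInterval) × (Fin (m + N) → unitInterval)) =>
        fun i : Fin (m + N) => kur m N q (q 0) i +
          if (i : ℕ) < m + p.1 + 1 then sz δ p.2.1 p.1 * (p.2.2 i : ℝ) else 0) :=
    continuous_prod_of_discrete_left.mpr hd
  exact hd2.comp (f := fun p : (Fin N → unitInterval) × (Fin N × (Fin (m + N) → unitInterval)) =>
    (p.2.1, (p.1, p.2.2))) (by fun_prop)

theorem range_FF {X : Type*} [MetricSpace X] (m N : ℕ) (q : ℕ → X) (δ : ℝ) (hδ : 0 < δ)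
    (x : Fin N → unitInterval) :
    range (fun w => FF m N q δ (x, w)) =
      range (kur m N q) ∪ ⋃ j : Fin N, cube (kur m N q (q 0)) (m + j + 1) (sz δ x j) := by
  ext y
  constructor
  · rintro ⟨a | ⟨j, u⟩, rfl⟩
    · exact Or.inl ⟨a, rfl⟩
    · refine Or.inr (mem_iUnion.mpr ⟨j, fun i => ?_⟩)
      have h0 := (sz_pos δ hδ x j).le
      have h1 := (u i).2.1
      have h2 := (u i).2.2
      simp only [FF, Sum.elim_inr]
      split_ifs
      · have := mul_nonneg h0 h1
        have := mul_le_mul_of_nonneg_left h2 h0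
        constructor <;> linarith
      · simp
  · rintro (⟨a, rfl⟩ | hy)
    · exact ⟨Sum.inl a, rfl⟩
    · obtain ⟨j, hj⟩ := mem_iUnion.mp hy
      have h0 := sz_pos δ hδ x j
      refine ⟨Sum.inr (j, fun i => projIcc (0 : ℝ) 1 zero_le_one
        ((y i - kur m N q (q 0) i) / sz δ x j)), ?_⟩
      ext i
      have h1 := hj i
      simp only [FF, Sum.elim_inr]
      split_ifs at h1 ⊢ with h
      · rw [projIcc_of_mem zero_le_one (x := (y i - kur m N q (q 0) i) / sz δ x j)
          ⟨div_nonneg (by linarith [h1.1]) h0.le, by rw [div_le_one h0]; linarith [h1.2]⟩]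
        simp only
        field_simp
        ring
      · linarith [h1.1, h1.2]

theorem kur_dist {X : Type*} [MetricSpace X] (m N : ℕ) (q : ℕ → X) (η : ℝ) 
    (hq : ∀ x, ∃ i < m, dist x (q i) ≤ η) (x y : X) :
    |dist x y - dist (kur m N q x) (kur m N q y)| ≤ 2 * η := by
  have h1 : dist (kur m N q x) (kur m N q y) ≤ dist x y := by
    rw [dist_pi_le_iff dist_nonneg]
    intro i
    unfold kur
    split_ifs
    · exact abs_dist_sub_le x y (q i)
    · simp
  obtain ⟨i, hi, hxi⟩ := hq x
  have h2 := dist_le_pi_dist (kur m N q x) (kur m N q y) ⟨i, by omega⟩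
  simp only [kur, hi, if_pos, Real.dist_eq] at h2
  have h3 := (neg_le_abs _).trans h2
  have h4 := dist_triangle_right x y (q i)
  have h6 : (0 : ℝ) ≤ η := dist_nonneg.trans hxi
  rw [abs_le]
  constructor <;> linarith

theorem pathConn {X : Type*} [MetricSpace X] [PathConnectedSpace X] (m N : ℕ) (q : ℕ → X) (δ : ℝ)
    (x : Fin N → unitInterval) : IsPathConnected (range (fun w => FF m N q δ (x, w))) := by
  have hc : Continuous (fun w => FF m N q δ (x, w)) :=
    (continuous_FF m N q δ).comp (by fun_prop)
  refine ⟨kur m N q (q 0), ⟨Sum.inl (q 0), rfl⟩, ?_⟩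
  rintro _ ⟨a | ⟨j, u⟩, rfl⟩
  · have := (isPathConnected_range (hc.comp continuous_inl)).joinedIn
      (kur m N q (q 0)) ⟨q 0, rfl⟩ (kur m N q a) ⟨a, rfl⟩
    refine this.mono ?_
    rintro _ ⟨b, rfl⟩
    exact ⟨Sum.inl b, rfl⟩
  · have hc2 : Continuous (fun t : unitInterval => FF m N q δ (x, Sum.inr (j, fun i => t * u i))) :=
      hc.comp (continuous_inr.comp (by fun_prop))
    have : PathConnectedSpace unitInterval :=
      isPathConnected_iff_pathConnectedSpace.mp
        ((convex_Icc (0 : ℝ) 1).isPathConnected ⟨0, by simp⟩)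
    have := (isPathConnected_range hc2).joinedIn
      (kur m N q (q 0)) ⟨0, by ext i; simp [FF]⟩ (FF m N q δ (x, Sum.inr (j, u))) ⟨1, by simp only [one_mul]⟩
    refine this.mono ?_
    rintro _ ⟨b, rfl⟩
    exact ⟨_, rfl⟩

theorem part_two (U : Set ↥GHPathConnected) (hU : IsOpen U) (hne : U.Nonempty) (n : ℕ) :
    ¬ CovDimLE ↥U n := by
  obtain ⟨p, hp⟩ := hne
  obtain ⟨ε, hε, hball⟩ := Metric.isOpen_iff.mp hU p hp
  have : PathConnectedSpace (p : GHSpace).Rep := p.2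
  let X := (p : GHSpace).Rep
  obtain ⟨m, q, hq⟩ := exists_net X (ε / 4) (by positivity)
  let N := n + 1
  set δ : ℝ := ε / 4 / (2 * (N : ℝ) + 1) with hδdef
  have hN : (0 : ℝ) < 2 * (N : ℝ) + 1 := by positivity
  have hδ : 0 < δ := by positivity
  have hδN : δ * (2 * (N : ℝ) + 1) = ε / 4 := by rw [hδdef]; field_simp
  let F : C((Fin N → unitInterval) × (X ⊕ (Fin N × (Fin (m + N) → unitInterval))),
    Fin (m + N) → ℝ) := ⟨FF m N q δ, continuous_FF m N q δ⟩
  let Z : (Fin N → unitInterval) → TopologicalSpace.NonemptyCompacts (Fin (m + N) → ℝ) :=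
    fun x => rangeNC (F.curry x)
  have hZc : Continuous Z := continuous_rangeNC F
  have hZ : ∀ x, (Z x : Set (Fin (m + N) → ℝ)) =
      range (kur m N q) ∪ ⋃ j : Fin N, cube (kur m N q (q 0)) (m + j + 1) (sz δ x j) :=
    fun x => range_FF m N q δ hδ x
  have hmem : ∀ x, (Z x).toGHSpace ∈ GHPathConnected := fun x =>
    range_mem _ (pathConn m N q δ x)
  have hkL : ∀ a, kur m N q a ∈ L (m + N) m := by
    intro a i hi
    simp [kur, not_lt.mpr hi]
  have hdist : ∀ x, dist ((Z x).toGHSpace) (p : GHSpace) < ε := by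
    intro x
    have h1 : ghDist X (Z x) ≤ 0 + (2 * (ε / 4)) / 2 + ε / 4 := by
      refine ghDist_le_of_approx_subsets (s := univ)
        (fun a : (univ : Set X) => (⟨kur m N q a, ⟨Sum.inl a, rfl⟩⟩ : Z x)) ?_ ?_ ?_
      · intro a
        exact ⟨a, trivial, by simp⟩
      · rintro ⟨y, hy⟩
        have hy' : y ∈ (Z x : Set (Fin (m + N) → ℝ)) := hy
        rw [hZ] at hy'
        rcases hy' with ⟨a, rfl⟩ | hy'
        · refine ⟨⟨a, trivial⟩, ?_⟩
          rw [Subtype.dist_eq]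
          simp
          positivity
        · obtain ⟨j, hj⟩ := mem_iUnion.mp hy'
          refine ⟨⟨q 0, trivial⟩, ?_⟩
          rw [Subtype.dist_eq]
          refine (dist_pi_le_iff (by positivity)).mpr fun i => ?_
          have h1 := hj i
          have h2 := sz_le δ hδ x j
          have h3 := sz_pos δ hδ x j
          rw [hδN] at h2
          simp only [Real.dist_eq]
          rw [abs_le]
          split_ifs at h1 <;> constructor <;> linarith [h1.1, h1.2]
      · intro a b
        exact kur_dist m N q (ε / 4) hq a b
    have h2 : dist (toGHSpace X) (toGHSpace (Z x)) ≤ 0 + (2 * (ε / 4)) / 2 + ε / 4 := h1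
    have h3 : toGHSpace X = (p : GHSpace) := GHSpace.toGHSpace_rep _
    rw [h3, dist_comm] at h2
    have h4 : dist ((Z x).toGHSpace) (p : GHSpace) ≤ 0 + (2 * (ε / 4)) / 2 + ε / 4 := h2
    linarith
  let φ : (Fin (n + 1) → unitInterval) → U := fun x =>
    ⟨⟨(Z x).toGHSpace, hmem x⟩, hball (hdist x)⟩
  refine SpernerAux.not_covDimLE n φ ?_ ?_
  · exact ((toGHSpace_continuous.comp hZc).subtype_mk _).subtype_mk _
  · intro i x y hx hy hxy
    have h1 : (Z x).toGHSpace = (Z y).toGHSpace :=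
      congrArg (fun u : U => ((u : ↥GHPathConnected) : GHSpace)) hxy
    have h2 := inv_eq _ _ h1 (m + (i : ℕ) + 1)
    rw [diam_D (range (kur m N q)) (kur m N q (q 0)) (sz δ x) (sz_pos δ hδ x) (sz_anti δ hδ x)
        (by rintro _ ⟨a, rfl⟩; exact hkL a) (hkL _) _ (hZ x) i,
      diam_D (range (kur m N q)) (kur m N q (q 0)) (sz δ y) (sz_pos δ hδ y) (sz_anti δ hδ y)
        (by rintro _ ⟨a, rfl⟩; exact hkL a) (hkL _) _ (hZ y) i] at h2
    have h3 := mul_left_cancel₀ hδ.ne' h2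
    rw [hx, hy] at h3
    simp at h3

end GHAux

/-- The set `𝒫` of all compact path-connected metric spaces
is path-connected as a subspace of the Gromov–Hausdorff space, and every
nonempty open subset of `𝒫` has infinite covering dimension. -/
theorem statement5 :
    PathConnectedSpace ↥GHPathConnected ∧
    ∀ U : Set ↥GHPathConnected, IsOpen U → U.Nonempty →
      ¬ ∃ n : ℕ, CovDimLE ↥U n := by
  exact ⟨GHAux.part_one, fun U hU hne ⟨n, hn⟩ => GHAux.part_two U hU hne n hn⟩
end
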